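/- Let d ≥ 1, let α = (α_1,…,α_d) be a multi-index with α_j > −1/2 for each j, and let 0 < λ < β < 1. Set c_λ = ∫_0^∞ u^{−λ−1}(e^{−u}−1) du and define the Bessel Laguerre fractional derivative 𝒟_λ^α f(x) = (1/c_λ) ∫_0^∞ t^{−λ−1} (e^{−t} P_t^α f(x) − f(x)) dt. Then there exists C > 0, depending only on α, d, β, λ, such that for every bounded measurable f on (0,∞)^d satisfying sup_x |∂_t P_t^α f(x)| ≤ A t^{β−1} for all t > 0, one has: sup_x |𝒟_λ^α f(x)| ≤ C (∥f∥_∞ + A), and sup_x |∂_t P_t^α(𝒟_λ^α f)(x)| ≤ C (∥f∥_∞ + A) t^{β−λ−1} for all t > 0. In particular 𝒟_λ^α maps Lip_β(μ_α) boundedly into Lip_{β−λ}(μ_α). -/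

import Mathlib

open MeasureTheory Real Set

noncomputable def besselI (ν z : ℝ) : ℝ :=
  ∑' m : ℕ, (z / 2) ^ (2 * (m : ℝ) + ν) / (Nat.factorial m * Real.Gamma ((m : ℝ) + ν + 1))

/-- The positive orthant `(0,∞)^d`. -/
def posOrthant (d : ℕ) : Set (Fin d → ℝ) := Set.univ.pi fun _ => Set.Ioi 0

/-- The Poisson–Laguerre kernel `p_t^α(x,y)`. -/
noncomputable def plKernel (d : ℕ) (α : Fin d → ℝ) (t : ℝ) (x y : Fin d → ℝ) : ℝ :=
  (1 / (2 * Real.sqrt π)) *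
    ∫ r in Set.Ioo (0 : ℝ) 1,
      (t * Real.exp (t ^ 2 / (4 * Real.log r)) /
          ((1 - r) ^ d * (-Real.log r) ^ ((3 : ℝ) / 2))) *
        (∏ j, (y j / x j) ^ (α j / 2) *
            Real.exp (-((r * x j + y j) / (1 - r)) - α j * Real.log r / 2) *
            besselI (α j) (2 * Real.sqrt (r * x j * y j) / (1 - r))) / r

/-- The Poisson–Laguerre semigroup `P_t^α f`, with the convention `P_0^α f = f`. -/
noncomputable def plP (d : ℕ) (α : Fin d → ℝ) (t : ℝ)
    (f : (Fin d → ℝ) → ℝ) (x : Fin d → ℝ) : ℝ :=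
  if t = 0 then f x else ∫ y in posOrthant d, plKernel d α t x y * f y

/-- The Bessel Laguerre fractional derivative `𝒟_λ^α f` for `0 < λ < 1`. -/
noncomputable def besselLaguerreFracDeriv (d : ℕ) (α : Fin d → ℝ) (lam : ℝ)
    (f : (Fin d → ℝ) → ℝ) (x : Fin d → ℝ) : ℝ :=
  (1 / ∫ u in Set.Ioi (0 : ℝ), u ^ (-lam - 1) * (Real.exp (-u) - 1)) *
    ∫ t in Set.Ioi (0 : ℝ), t ^ (-lam - 1) * (Real.exp (-t) * plP d α t f x - f x)

/-! In the variable `s = -log r` the Poisson–Laguerre semigroup is the Laguerre heat flow stopped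
at an independent random time with the one-sided stable law of index `1/2`. The heat kernel is a
Poisson mixture of Gamma laws, so its Laplace transform is explicit; hence `P_t` is a semigroup of
Markov kernels, and the density of the stopping time yields `|∂_t P_t f| ≤ 6 ‖f‖ / t`.

The bound `|∂_t P_t f| ≤ A t ^ (β - 1)` integrates to the existence of boundary values
`g x = lim P_t f x` at the rate `A t ^ β / β`. Symmetry of `P_t` with respect to the Laguerre
measure and its continuity on exponentials show that `f = g` almost everywhere. Where `f x = g x`
the integral defining `𝒟 f x` converges absolutely, which gives the first estimate; elsewhere it
diverges and has the value `0` by convention.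

By Fubini `P_t` commutes with that integral, so an increment of `P_t 𝒟 f` in `t` is the integral
of `u ^ (-λ - 1)` times an increment of `exp (-u) P_{t+u} f - P_t f`. The latter splits into a
second difference of `P_t f` and a remainder of size `min u 1` times a first difference. Writing
`P_t = P_{t/2} P_{t/2}` bounds the second difference by `A t ^ (β - 1) h min (u / t) 1`, and
integration against `u ^ (-λ - 1)` produces `t ^ (β - λ - 1)`. -/

open ProbabilityTheory Filter Topology
open scoped BoundedContinuousFunction ENNReal

section LaplaceUniqueness

variable {ι X : Type*} [Fintype ι] [TopologicalSpace X] [PolishSpace X] [MeasurableSpace X]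
  [BorelSpace X]

theorem exists_eq_prod_pow_of_mem_closure_range {R : Type*} [CommMonoid R] {c : ι → R} {a : R}
    (ha : a ∈ Submonoid.closure (range c)) : ∃ k : ι → ℕ, a = ∏ i, c i ^ k i := by
  classical
  induction ha using Submonoid.closure_induction with
  | mem a ha =>
    obtain ⟨i, rfl⟩ := ha
    exact ⟨Pi.single i 1, by rw [Finset.prod_eq_single i] <;> simp +contextual⟩
  | one => exact ⟨0, by simp⟩
  | mul a b _ _ ha hb =>
    obtain ⟨k, rfl⟩ := ha
    obtain ⟨l, rfl⟩ := hb
    exact ⟨k + l, by simp [pow_add, Finset.prod_mul_distrib]⟩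

theorem ext_of_integral_prod_pow_eq {c : ι → X →ᵇ ℝ}
    (hc : Function.Injective fun x i => c i x) {μ ν : Measure X} [IsFiniteMeasure μ]
    [IsFiniteMeasure ν] (h : ∀ k : ι → ℕ, ∫ x, ∏ i, c i x ^ k i ∂μ = ∫ x, ∏ i, c i x ^ k i ∂ν) :
    μ = ν := by
  let S : StarSubalgebra ℝ (X →ᵇ ℝ) :=
    { Algebra.adjoin ℝ (range c) with
      star_mem' := fun {a} ha => by rwa [show star a = a by ext; simp] }
  refine ext_of_forall_mem_subalgebra_integral_eq_of_polish (𝕜 := ℝ) (A := S) ?_ ?_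
  · intro x y hxy
    obtain ⟨i, hi⟩ := Function.ne_iff.mp (hc.ne hxy)
    exact ⟨c i, ⟨(c i : C(X, ℝ)), ⟨c i, Algebra.subset_adjoin ⟨i, rfl⟩, rfl⟩, rfl⟩, hi⟩
  · intro g hg
    have hg' : g ∈ Submodule.span ℝ (Submonoid.closure (range c) : Set (X →ᵇ ℝ)) := by
      rwa [← Algebra.adjoin_eq_span]
    clear hg
    induction hg' using Submodule.span_induction with
    | mem a ha =>
      obtain ⟨k, rfl⟩ := exists_eq_prod_pow_of_mem_closure_range ha
      simpa only [BoundedContinuousFunction.coe_prod, BoundedContinuousFunction.coe_pow,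
        Finset.prod_apply, Pi.pow_apply] using h k
    | zero => simp
    | add a b _ _ iha ihb =>
      simp only [BoundedContinuousFunction.coe_add, Pi.add_apply]
      rw [integral_add (a.integrable μ) (b.integrable μ), integral_add (a.integrable ν)
        (b.integrable ν), iha, ihb]
    | smul r a _ iha =>
      simp only [BoundedContinuousFunction.coe_smul, integral_smul, iha]

/-- A bounded continuous injection of `ℝ` that agrees with `y ↦ exp (-y)` on `[0, ∞)`, so that
Laplace transforms of measures carried by `[0, ∞)` are moments of a point-separating family. -/
noncomputable def expNegExtension : ℝ →ᵇ ℝ :=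
  BoundedContinuousFunction.ofNormedAddCommGroup
    (fun y => exp (-max y 0) + (1 - exp (min y 0))) (by fun_prop) 2 fun y => by
      have h₁ : exp (-max y 0) ≤ 1 := by simp
      have h₂ : exp (min y 0) ≤ 1 := by simp
      rw [norm_eq_abs, abs_le]
      constructor <;> linarith [exp_pos (-max y 0), exp_pos (min y 0)]

theorem expNegExtension_of_nonneg {y : ℝ} (hy : 0 ≤ y) : expNegExtension y = exp (-y) := by
  simp [expNegExtension, hy]

theorem expNegExtension_injective : Function.Injective expNegExtension := by
  refine StrictAnti.injective fun y z hyz => ?_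
  change exp (-max z 0) + (1 - exp (min z 0)) < exp (-max y 0) + (1 - exp (min y 0))
  rcases le_or_gt 0 y with hy | hy
  · simpa [hy, hy.trans hyz.le] using hyz
  · have h₁ : exp (min y 0) < exp (min z 0) := by simpa [hy, hy.le] using hyz
    have h₂ : exp (-max z 0) ≤ exp (-max y 0) := by
      gcongr
    linarith

theorem ext_of_laplace_eq {φ : X → ι → ℝ} (hφ : Continuous φ) (hinj : Function.Injective φ)
    {μ ν : Measure X} [IsFiniteMeasure μ] [IsFiniteMeasure ν]
    (hμ : ∀ᵐ x ∂μ, ∀ i, 0 ≤ φ x i) (hν : ∀ᵐ x ∂ν, ∀ i, 0 ≤ φ x i)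
    (h : ∀ k : ι → ℕ, ∫⁻ x, .ofReal (exp (-∑ i, k i * φ x i)) ∂μ =
      ∫⁻ x, .ofReal (exp (-∑ i, k i * φ x i)) ∂ν) : μ = ν := by
  let c : ι → X →ᵇ ℝ := fun i =>
    expNegExtension.compContinuous ⟨fun x => φ x i, (continuous_apply i).comp hφ⟩
  have moment : ∀ ρ : Measure X, (∀ᵐ x ∂ρ, ∀ i, 0 ≤ φ x i) → ∀ k : ι → ℕ,
      ∫ x, ∏ i, c i x ^ k i ∂ρ = (∫⁻ x, .ofReal (exp (-∑ i, k i * φ x i)) ∂ρ).toReal := by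
    intro ρ hρ k
    rw [← integral_eq_lintegral_of_nonneg_ae (.of_forall fun _ => (exp_pos _).le)
      (Continuous.aestronglyMeasurable (by fun_prop))]
    refine integral_congr_ae (hρ.mono fun x hx => ?_)
    change ∏ i, expNegExtension (φ x i) ^ k i = _
    simp only [expNegExtension_of_nonneg (hx _), ← Finset.sum_neg_distrib, exp_sum,
      ← exp_nat_mul, mul_neg]
  refine ext_of_integral_prod_pow_eq (c := c) (fun x y hxy => hinj (funext fun i => ?_))
    fun k => by rw [moment μ hμ, moment ν hν, h]
  exact expNegExtension_injective (congrFun hxy i)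

theorem ext_of_laplace_eq_real {μ ν : Measure ℝ} [IsFiniteMeasure μ] [IsFiniteMeasure ν]
    (hμ : ∀ᵐ y ∂μ, 0 ≤ y) (hν : ∀ᵐ y ∂ν, 0 ≤ y)
    (h : ∀ k : ℕ, ∫⁻ y, .ofReal (exp (-(k * y))) ∂μ = ∫⁻ y, .ofReal (exp (-(k * y))) ∂ν) :
    μ = ν :=
  ext_of_laplace_eq (φ := fun y (_ : Unit) => y) (by fun_prop)
    (fun _ _ hyz => congrFun hyz ()) (by simpa using hμ) (by simpa using hν)
    fun k => by simpa using h (k ())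

theorem lintegral_ofReal_eq_lintegral_ofReal_neg {X : Type*} [MeasurableSpace X] {μ : Measure X}
    {h : X → ℝ} (hh : Integrable h μ) (h0 : ∫ x, h x ∂μ = 0) :
    ∫⁻ x, .ofReal (h x) ∂μ = ∫⁻ x, .ofReal (-h x) ∂μ := by
  rw [integral_eq_lintegral_pos_part_sub_lintegral_neg_part hh, sub_eq_zero] at h0
  exact (ENNReal.toReal_eq_toReal_iff' hh.lintegral_lt_top.ne hh.neg.lintegral_lt_top.ne).mp h0

theorem lintegral_ofReal_withDensity_ofReal {X : Type*} [MeasurableSpace X] {μ : Measure X}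
    {w g : X → ℝ} (hw : Measurable w) (hw0 : ∀ x, 0 ≤ w x) (hg : AEMeasurable g μ) :
    ∫⁻ x, .ofReal (w x) ∂(μ.withDensity fun x => .ofReal (g x)) =
      ∫⁻ x, .ofReal (w x * g x) ∂μ := by
  rw [lintegral_withDensity_eq_lintegral_mul₀ (by fun_prop) (by fun_prop)]
  refine lintegral_congr fun x => ?_
  rw [Pi.mul_apply, mul_comm, ENNReal.ofReal_mul (hw0 x)]

theorem ae_eq_zero_of_laplace_eq_zero {φ : X → ι → ℝ} (hφ : Continuous φ)
    (hinj : Function.Injective φ) {μ : Measure X} (hμ : ∀ᵐ x ∂μ, ∀ i, 0 ≤ φ x i) {h : X → ℝ}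
    (hh : Integrable h μ) (h0 : ∀ k : ι → ℕ, ∫ x, exp (-∑ i, k i * φ x i) * h x ∂μ = 0) :
    h =ᵐ[μ] 0 := by
  have hmeas := hh.aestronglyMeasurable.aemeasurable
  have hint : ∀ k : ι → ℕ, Integrable (fun x => exp (-∑ i, k i * φ x i) * h x) μ := fun k => by
    refine hh.bdd_mul (c := 1) (Continuous.aestronglyMeasurable (by fun_prop)) ?_
    filter_upwards [hμ] with x hx
    rw [norm_eq_abs, abs_exp, exp_le_one_iff, neg_nonpos]
    exact Finset.sum_nonneg fun i _ => mul_nonneg (Nat.cast_nonneg _) (hx i)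
  have := isFiniteMeasure_withDensity_ofReal hh.hasFiniteIntegral
  have := isFiniteMeasure_withDensity_ofReal (f := fun x => -h x) hh.neg.hasFiniteIntegral
  have posPart_eq_negPart : (μ.withDensity fun x => .ofReal (h x)) =
      μ.withDensity fun x => .ofReal (-h x) := by
    refine ext_of_laplace_eq hφ hinj (withDensity_absolutelyContinuous _ _ hμ)
      (withDensity_absolutelyContinuous _ _ hμ) fun k => ?_
    have hexp : Continuous fun x => exp (-∑ i, k i * φ x i) := by fun_prop
    rw [lintegral_ofReal_withDensity_ofReal hexp.measurable (fun _ => exp_nonneg _) hmeas,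
      lintegral_ofReal_withDensity_ofReal (g := fun x => -h x) hexp.measurable
        (fun _ => exp_nonneg _) hmeas.neg]
    simpa only [mul_neg] using
      lintegral_ofReal_eq_lintegral_ofReal_neg (hint k) (h0 k)
  have hae := (withDensity_eq_iff (by fun_prop) (by fun_prop)
    hh.lintegral_lt_top.ne).mp posPart_eq_negPart
  filter_upwards [hae] with x hx
  rcases le_total 0 (h x) with hx0 | hx0
  · rw [ENNReal.ofReal_of_nonpos (neg_nonpos.mpr hx0), ENNReal.ofReal_eq_zero] at hx
    exact hx.antisymm hx0
  · rw [ENNReal.ofReal_of_nonpos hx0, eq_comm, ENNReal.ofReal_eq_zero, neg_nonpos] at hx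
    exact le_antisymm hx0 hx

end LaplaceUniqueness

section HalfStable

/-- `t` itself if `t` is positive and `1` otherwise. Families of probability measures indexed by a
positive time are extended through `posTime` to all times, which makes them Markov kernels. -/
noncomputable def posTime (t : ℝ) : ℝ := if 0 < t then t else 1

theorem posTime_pos (t : ℝ) : 0 < posTime t := by
  unfold posTime; split_ifs with h <;> simp [h]

theorem posTime_of_pos {t : ℝ} (ht : 0 < t) : posTime t = t := if_pos ht

@[fun_prop]
theorem measurable_posTime : Measurable posTime :=
  Measurable.ite measurableSet_Ioi measurable_id measurable_const

/-- The density in `s` of the one-sided stable law of index `1/2` with parameter `t`, i.e. of the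
law whose Laplace transform is `κ² ↦ exp (-t κ)`. -/
noncomputable def halfStableDensity (t s : ℝ) : ℝ :=
  t * exp (-(t ^ 2 / (4 * s))) / (2 * √π * s ^ ((3 : ℝ) / 2))

theorem halfStableDensity_nonneg {t s : ℝ} (ht : 0 ≤ t) (hs : 0 ≤ s) :
    0 ≤ halfStableDensity t s := by
  unfold halfStableDensity; positivity

@[fun_prop]
theorem measurable_halfStableDensity : Measurable ↿halfStableDensity := by
  unfold halfStableDensity; fun_prop

/-- The error function without its normalizing factor `2 / √π`. -/
noncomputable def gaussPrimitive (z : ℝ) : ℝ := ∫ v in (0 : ℝ)..z, exp (-v ^ 2)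

theorem hasDerivAt_gaussPrimitive (z : ℝ) : HasDerivAt gaussPrimitive (exp (-z ^ 2)) z :=
  (by fun_prop : Continuous fun v : ℝ => exp (-v ^ 2)).integral_hasStrictDerivAt 0 z |>.hasDerivAt

theorem gaussPrimitive_neg (z : ℝ) : gaussPrimitive (-z) = -gaussPrimitive z := by
  unfold gaussPrimitive
  rw [← intervalIntegral.integral_symm]
  have hcomp := intervalIntegral.integral_comp_neg (a := 0) (b := -z) fun v : ℝ => exp (-v ^ 2)
  simpa using hcomp

theorem tendsto_gaussPrimitive_atTop : Tendsto gaussPrimitive atTop (𝓝 (√π / 2)) := by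
  have hint : IntegrableOn (fun v : ℝ => exp (-v ^ 2)) (Ioi 0) := by
    simpa using (integrable_exp_neg_mul_sq one_pos).integrableOn
  have hlim := intervalIntegral_tendsto_integral_Ioi 0 hint tendsto_id
  have hgauss : ∫ v in Ioi (0 : ℝ), exp (-v ^ 2) = √π / 2 := by
    simpa using integral_gaussian_Ioi 1
  rwa [hgauss] at hlim

theorem tendsto_gaussPrimitive_atBot : Tendsto gaussPrimitive atBot (𝓝 (-(√π / 2))) := by
  refine (tendsto_gaussPrimitive_atTop.comp tendsto_neg_atBot_atTop).neg.congr fun z => ?_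
  simp [gaussPrimitive_neg]

/-- A primitive of `s ↦ √π * halfStableDensity t s * exp (-(κ ^ 2 * s))`, found by completing the
square: `t² / (4 s) + κ² s = (t / (2 √s) ∓ κ √s)² ± t κ`. -/
noncomputable def halfStablePrimitive (t κ s : ℝ) : ℝ :=
  -(exp (-(t * κ)) * gaussPrimitive (t / (2 * √s) - κ * √s)) -
    exp (t * κ) * gaussPrimitive (t / (2 * √s) + κ * √s)

theorem hasDerivAt_halfStablePrimitive (t κ : ℝ) {s : ℝ} (hs : 0 < s) :
    HasDerivAt (halfStablePrimitive t κ)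
      (√π * (halfStableDensity t s * exp (-(κ ^ 2 * s)))) s := by
  have : 0 < √s := sqrt_pos.2 hs
  have : 0 < √π := sqrt_pos.2 pi_pos
  have hsqrt : HasDerivAt (fun s => √s) (1 / (2 * √s)) s := hasDerivAt_sqrt hs.ne'
  have hdiv : HasDerivAt (fun s => t / (2 * √s)) (-(t / (4 * √s ^ 3))) s := by
    refine (((hsqrt.const_mul 2).fun_inv (by positivity)).const_mul t).congr_deriv ?_
    field_simp
    ring
  have hsub := (hasDerivAt_gaussPrimitive (t / (2 * √s) - κ * √s)).comp s
    (hdiv.sub (hsqrt.const_mul κ))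
  have hadd := (hasDerivAt_gaussPrimitive (t / (2 * √s) + κ * √s)).comp s
    (hdiv.add (hsqrt.const_mul κ))
  have hsum := (hsub.const_mul (exp (-(t * κ)))).neg.sub (hadd.const_mul (exp (t * κ)))
  have square_sub : exp (-(t * κ)) * exp (-(t / (2 * √s) - κ * √s) ^ 2) =
      exp (-(t ^ 2 / (4 * s))) * exp (-(κ ^ 2 * s)) := by
    rw [← exp_add, ← exp_add]
    nth_rw 3 4 [← sq_sqrt hs.le]
    congr 1
    field_simp
    ring
  have square_add : exp (t * κ) * exp (-(t / (2 * √s) + κ * √s) ^ 2) =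
      exp (-(t ^ 2 / (4 * s))) * exp (-(κ ^ 2 * s)) := by
    rw [← exp_add, ← exp_add]
    nth_rw 3 4 [← sq_sqrt hs.le]
    congr 1
    field_simp
    ring
  refine hsum.congr_deriv ?_
  rw [← mul_assoc, ← mul_assoc, square_sub, square_add, halfStableDensity,
    rpow_div_two_eq_sqrt 3 hs.le]
  norm_cast
  field_simp
  ring

theorem tendsto_sqrt_nhdsGT_zero : Tendsto (fun s : ℝ => √s) (𝓝[>] 0) (𝓝[>] 0) := by
  refine tendsto_nhdsWithin_iff.2 ⟨?_, ?_⟩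
  · simpa using (continuous_sqrt.tendsto 0).mono_left (nhdsWithin_le_nhds (s := Ioi 0))
  · filter_upwards [self_mem_nhdsWithin] with s hs using sqrt_pos.2 hs

theorem tendsto_halfStablePrimitive_nhdsGT_zero {t : ℝ} (ht : 0 < t) (κ : ℝ) :
    Tendsto (halfStablePrimitive t κ) (𝓝[>] 0)
      (𝓝 (-(exp (-(t * κ)) * (√π / 2)) - exp (t * κ) * (√π / 2))) := by
  have hdiv : Tendsto (fun s : ℝ => t / (2 * √s)) (𝓝[>] 0) atTop := by
    refine ((tendsto_inv_nhdsGT_zero.comp tendsto_sqrt_nhdsGT_zero).const_mul_atTop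
      (half_pos ht)).congr fun s => ?_
    simp only [Function.comp_apply]
    rw [div_mul_eq_div_div, div_eq_mul_inv (t / 2)]
  have hmul : Tendsto (fun s : ℝ => κ * √s) (𝓝[>] 0) (𝓝 0) := by
    simpa using (tendsto_sqrt_nhdsGT_zero.mono_right nhdsWithin_le_nhds).const_mul κ
  have hsub := tendsto_gaussPrimitive_atTop.comp (hdiv.atTop_add hmul.neg)
  have hadd := tendsto_gaussPrimitive_atTop.comp (hdiv.atTop_add hmul)
  refine ((hsub.const_mul (exp (-(t * κ)))).neg.sub (hadd.const_mul (exp (t * κ)))).congr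
    fun s => ?_
  simp [halfStablePrimitive, sub_eq_add_neg]

theorem tendsto_halfStablePrimitive_atTop (t : ℝ) {κ : ℝ} (hκ : 0 ≤ κ) :
    Tendsto (halfStablePrimitive t κ) atTop
      (𝓝 (exp (-(t * κ)) * (√π / 2) - exp (t * κ) * (√π / 2))) := by
  have hdiv : Tendsto (fun s : ℝ => t / (2 * √s)) atTop (𝓝 0) :=
    (tendsto_sqrt_atTop.const_mul_atTop two_pos).const_div_atTop t
  rcases hκ.eq_or_lt with rfl | hκ
  · have hzero := (hasDerivAt_gaussPrimitive 0).continuousAt.tendsto.comp hdiv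
    have hprim : halfStablePrimitive t 0 =
        fun s => -gaussPrimitive (t / (2 * √s)) - gaussPrimitive (t / (2 * √s)) := by
      ext s; simp [halfStablePrimitive]
    rw [hprim]
    simpa [gaussPrimitive] using hzero.neg.sub hzero
  · have hmul := tendsto_sqrt_atTop.const_mul_atTop hκ
    have hsub := tendsto_gaussPrimitive_atBot.comp
      (hdiv.add_atBot (tendsto_neg_atTop_atBot.comp hmul))
    have hadd := tendsto_gaussPrimitive_atTop.comp (hdiv.add_atTop hmul)
    have hsum := (hsub.const_mul (exp (-(t * κ)))).neg.sub (hadd.const_mul (exp (t * κ)))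
    rw [mul_neg, neg_neg] at hsum
    refine hsum.congr fun s => ?_
    simp [halfStablePrimitive, sub_eq_add_neg]

theorem integrableOn_and_integral_Ioi_of_hasDerivAt_of_nonneg {g g' : ℝ → ℝ} {a m l : ℝ}
    (hm : Tendsto g (𝓝[>] a) (𝓝 m)) (hderiv : ∀ x ∈ Ioi a, HasDerivAt g (g' x) x)
    (hg' : ∀ x ∈ Ioi a, 0 ≤ g' x) (hl : Tendsto g atTop (𝓝 l)) :
    IntegrableOn g' (Ioi a) ∧ ∫ x in Ioi a, g' x = l - m := by
  have hcont : ContinuousWithinAt (Function.update g a m) (Ici a) a := by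
    rwa [continuousWithinAt_update_same, Ici_sdiff_left]
  have hderiv' : ∀ x ∈ Ioi a, HasDerivAt (Function.update g a m) (g' x) x := fun x hx => by
    refine (hderiv x hx).congr_of_eventuallyEq ?_
    filter_upwards [isOpen_Ioi.mem_nhds hx] with u hu using Function.update_of_ne hu.ne' _ _
  have hlim : Tendsto (Function.update g a m) atTop (𝓝 l) := by
    refine hl.congr' ?_
    filter_upwards [eventually_gt_atTop a] with u hu
    exact (Function.update_of_ne hu.ne' _ _).symm
  refine ⟨integrableOn_Ioi_deriv_of_nonneg hcont hderiv' hg' hlim, ?_⟩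
  simpa using integral_Ioi_of_hasDerivAt_of_nonneg hcont hderiv' hg' hlim

theorem integrableOn_and_integral_halfStableDensity_mul_exp {t κ : ℝ} (ht : 0 < t) (hκ : 0 ≤ κ) :
    IntegrableOn (fun s => halfStableDensity t s * exp (-(κ ^ 2 * s))) (Ioi 0) ∧
      ∫ s in Ioi 0, halfStableDensity t s * exp (-(κ ^ 2 * s)) = exp (-(t * κ)) := by
  have hpi : √π ≠ 0 := (sqrt_pos.2 pi_pos).ne'
  obtain ⟨hint, hval⟩ := integrableOn_and_integral_Ioi_of_hasDerivAt_of_nonneg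
    (tendsto_halfStablePrimitive_nhdsGT_zero ht κ)
    (fun s hs => hasDerivAt_halfStablePrimitive t κ hs)
    (fun s hs => mul_nonneg (sqrt_nonneg π)
      (mul_nonneg (halfStableDensity_nonneg ht.le (le_of_lt hs)) (exp_pos _).le))
    (tendsto_halfStablePrimitive_atTop t hκ)
  refine ⟨?_, mul_left_cancel₀ hpi ?_⟩
  · simpa [IntegrableOn, ← mul_assoc, inv_mul_cancel₀ hpi] using hint.const_mul (√π)⁻¹
  · rw [← integral_const_mul, hval]
    ring

theorem integrableOn_halfStableDensity {t : ℝ} (ht : 0 < t) :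
    IntegrableOn (halfStableDensity t) (Ioi 0) := by
  simpa using (integrableOn_and_integral_halfStableDensity_mul_exp ht le_rfl).1

theorem integral_halfStableDensity {t : ℝ} (ht : 0 < t) :
    ∫ s in Ioi 0, halfStableDensity t s = 1 := by
  simpa using (integrableOn_and_integral_halfStableDensity_mul_exp ht le_rfl).2

/-- The one-sided stable law of index `1/2` as a Markov kernel in its parameter, which is replaced
by `1` when it is not positive. -/
noncomputable def halfStable : Kernel ℝ ℝ :=
  (Kernel.const ℝ (volume.restrict (Ioi 0))).withDensity
    fun t s => .ofReal (halfStableDensity (posTime t) s)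

theorem halfStable_apply (t : ℝ) : halfStable t =
    (volume.restrict (Ioi 0)).withDensity fun s => .ofReal (halfStableDensity (posTime t) s) := by
  rw [halfStable, Kernel.withDensity_apply _ (by fun_prop), Kernel.const_apply]

theorem ae_halfStable_pos (t : ℝ) : ∀ᵐ s ∂halfStable t, 0 < s := by
  rw [halfStable_apply]
  exact (withDensity_absolutelyContinuous _ _).ae_le (ae_restrict_mem measurableSet_Ioi)

theorem lintegral_exp_halfStable (t : ℝ) {k : ℝ} (hk : 0 ≤ k) :
    ∫⁻ s, .ofReal (exp (-(k * s))) ∂halfStable t = .ofReal (exp (-(posTime t * √k))) := by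
  obtain ⟨hint, hval⟩ := integrableOn_and_integral_halfStableDensity_mul_exp (posTime_pos t)
    (sqrt_nonneg k)
  have hdens : ∀ s ∈ Ioi (0 : ℝ), 0 ≤ halfStableDensity (posTime t) s := fun s hs =>
    halfStableDensity_nonneg (posTime_pos t).le (le_of_lt hs)
  rw [← hval, ofReal_integral_eq_lintegral_ofReal hint, halfStable_apply,
    lintegral_withDensity_eq_lintegral_mul _ (by fun_prop) (by fun_prop)]
  · refine setLIntegral_congr_fun measurableSet_Ioi fun s hs => ?_
    simp only [Pi.mul_apply]
    rw [ENNReal.ofReal_mul (hdens s hs), sq_sqrt hk]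
  · filter_upwards [ae_restrict_mem measurableSet_Ioi] with s hs
    exact mul_nonneg (hdens s hs) (exp_pos _).le

instance : IsMarkovKernel halfStable :=
  ⟨fun t => ⟨by simpa using lintegral_exp_halfStable t le_rfl⟩⟩

theorem halfStable_conv_halfStable {a b : ℝ} (ha : 0 < a) (hb : 0 < b) :
    halfStable a ∗ halfStable b = halfStable (a + b) := by
  refine ext_of_laplace_eq_real ?_ ((ae_halfStable_pos _).mono fun _ => le_of_lt) fun k => ?_
  · rw [Measure.conv, ae_map_iff (by fun_prop) measurableSet_Ici]
    filter_upwards [Measure.quasiMeasurePreserving_fst.ae (ae_halfStable_pos a),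
      Measure.quasiMeasurePreserving_snd.ae (ae_halfStable_pos b)] with p h₁ h₂
      using (add_pos h₁ h₂).le
  · have hexp : ∀ x y : ℝ, ENNReal.ofReal (exp (-(k * (x + y)))) =
        .ofReal (exp (-(k * x))) * .ofReal (exp (-(k * y))) := fun x y => by
      rw [← ENNReal.ofReal_mul (exp_pos _).le, ← exp_add, mul_add, neg_add]
    simp_rw [Measure.lintegral_conv (μ := halfStable a) (f := fun z => .ofReal (exp (-(k * z))))
      (by fun_prop), hexp]
    rw [lintegral_lintegral_mul (by fun_prop) (by fun_prop),
      lintegral_exp_halfStable _ k.cast_nonneg, lintegral_exp_halfStable _ k.cast_nonneg,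
      lintegral_exp_halfStable _ k.cast_nonneg, ← ENNReal.ofReal_mul (exp_pos _).le, ← exp_add,
      posTime_of_pos ha, posTime_of_pos hb, posTime_of_pos (add_pos ha hb), add_mul, neg_add]

theorem map_mul_halfStable_one {t : ℝ} (ht : 0 < t) :
    (halfStable 1).map (t ^ 2 * ·) = halfStable t := by
  have := Measure.isProbabilityMeasure_map (μ := halfStable 1) (f := (t ^ 2 * ·)) (by fun_prop)
  refine ext_of_laplace_eq_real ?_ ((ae_halfStable_pos _).mono fun _ => le_of_lt) fun k => ?_
  · rw [ae_map_iff (by fun_prop) measurableSet_Ici]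
    filter_upwards [ae_halfStable_pos 1] with s hs using by positivity
  · rw [lintegral_map (by fun_prop) (by fun_prop)]
    simp_rw [← mul_assoc]
    rw [lintegral_exp_halfStable _ (by positivity), lintegral_exp_halfStable _ k.cast_nonneg,
      posTime_of_pos one_pos, posTime_of_pos ht, sqrt_mul k.cast_nonneg, sqrt_sq ht.le, one_mul,
      mul_comm]

theorem tendsto_integral_halfStable {L : ℝ → ℝ} {M l : ℝ} (hL : Measurable L)
    (hM : ∀ s, |L s| ≤ M) (hl : Tendsto L (𝓝[>] 0) (𝓝 l)) :
    Tendsto (fun t => ∫ s, L s ∂halfStable t) (𝓝[>] 0) (𝓝 l) := by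
  have hscale : Tendsto (fun t : ℝ => ∫ s, L (t ^ 2 * s) ∂halfStable 1) (𝓝[>] 0)
      (𝓝 (∫ _, l ∂halfStable 1)) := by
    refine tendsto_integral_filter_of_dominated_convergence (fun _ => M)
      (.of_forall fun t => (hL.comp (by fun_prop)).aestronglyMeasurable)
      (.of_forall fun t => .of_forall fun s => hM _)
      (integrable_const M) ?_
    filter_upwards [ae_halfStable_pos 1] with s hs
    refine hl.comp (tendsto_nhdsWithin_iff.2 ⟨?_, ?_⟩)
    · refine tendsto_nhdsWithin_of_tendsto_nhds ?_
      exact Continuous.tendsto' (by fun_prop) _ _ (by simp)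
    · filter_upwards [self_mem_nhdsWithin] with t (ht : 0 < t)
      exact mem_Ioi.2 (by positivity)
  rw [integral_const, probReal_univ, one_smul] at hscale
  refine hscale.congr' ?_
  filter_upwards [self_mem_nhdsWithin] with t ht
  rw [← map_mul_halfStable_one ht, integral_map (by fun_prop) (by fun_prop)]

theorem integral_halfStable {t : ℝ} (ht : 0 < t) (F : ℝ → ℝ) :
    ∫ s, F s ∂halfStable t = ∫ s in Ioi 0, halfStableDensity t s * F s := by
  rw [halfStable_apply, posTime_of_pos ht, integral_withDensity_eq_integral_toReal_smul
    (by fun_prop) (.of_forall fun _ => ENNReal.ofReal_lt_top)]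
  refine setIntegral_congr_fun measurableSet_Ioi fun s hs => ?_
  simp [ENNReal.toReal_ofReal (halfStableDensity_nonneg ht.le (le_of_lt hs))]

/-- The derivative of `halfStableDensity t s` with respect to the parameter `t`. -/
noncomputable def halfStableDensityDeriv (t s : ℝ) : ℝ :=
  (1 - t ^ 2 / (2 * s)) * exp (-(t ^ 2 / (4 * s))) / (2 * √π * s ^ ((3 : ℝ) / 2))

theorem hasDerivAt_halfStableDensity (t s : ℝ) :
    HasDerivAt (fun u => halfStableDensity u s) (halfStableDensityDeriv t s) t := by
  have hexponent : HasDerivAt (fun u : ℝ => -(u ^ 2 / (4 * s))) (-(2 * t / (4 * s))) t := by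
    simpa using ((hasDerivAt_pow 2 t).div_const (4 * s)).fun_neg
  refine (((hasDerivAt_id t).mul hexponent.exp).div_const _).congr_deriv ?_
  rw [halfStableDensityDeriv, id]
  ring

theorem abs_halfStableDensityDeriv_le {t s : ℝ} (ht : 0 < t) (hs : 0 < s) :
    |halfStableDensityDeriv t s| ≤ 6 / t * halfStableDensity (t / 2) s := by
  set z := t ^ 2 / (4 * s) with hz
  have hz0 : 0 < z := by positivity
  have hpoly : |1 - 2 * z| ≤ 3 * exp (3 * z / 4) :=
    calc |1 - 2 * z| ≤ 1 + 2 * z := by rw [abs_le]; constructor <;> linarith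
      _ ≤ 3 * (3 * z / 4 + 1) := by linarith
      _ ≤ 3 * exp (3 * z / 4) := by gcongr; exact add_one_le_exp _
  have hexp : exp (3 * z / 4) * exp (-z) = exp (-((t / 2) ^ 2 / (4 * s))) := by
    rw [← exp_add, hz]
    congr 1
    field_simp
    ring
  calc |halfStableDensityDeriv t s|
      = |1 - 2 * z| * exp (-z) / (2 * √π * s ^ ((3 : ℝ) / 2)) := by
        rw [halfStableDensityDeriv, abs_div, abs_mul, abs_exp, ← hz,
          abs_of_pos (by positivity : 0 < 2 * √π * s ^ ((3 : ℝ) / 2)),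
          show t ^ 2 / (2 * s) = 2 * z by rw [hz]; field_simp; norm_num]
    _ ≤ 3 * exp (3 * z / 4) * exp (-z) / (2 * √π * s ^ ((3 : ℝ) / 2)) := by gcongr
    _ = 6 / t * halfStableDensity (t / 2) s := by
        rw [mul_assoc, hexp, halfStableDensity]
        field_simp
        norm_num

theorem halfStableDensity_div_le {a b s : ℝ} (ha : 0 < a) (hab : a ≤ b) (hs : 0 < s) :
    halfStableDensity b s / b ≤ halfStableDensity a s / a := by
  simp only [halfStableDensity, mul_div_assoc, mul_div_cancel_left₀ _ ha.ne',
    mul_div_cancel_left₀ _ (ha.trans_le hab).ne']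
  gcongr

theorem abs_halfStableDensityDeriv_le_of_half_lt {t u s : ℝ} (ht : 0 < t) (hu : t / 2 < u)
    (hs : 0 < s) : |halfStableDensityDeriv u s| ≤ 12 / t * halfStableDensity (t / 4) s :=
  calc |halfStableDensityDeriv u s| ≤ 6 / u * halfStableDensity (u / 2) s :=
        abs_halfStableDensityDeriv_le (by linarith) hs
    _ = 3 * (halfStableDensity (u / 2) s / (u / 2)) := by ring
    _ ≤ 3 * (halfStableDensity (t / 4) s / (t / 4)) := by
        have hle := halfStableDensity_div_le (a := t / 4) (b := u / 2) (by positivity)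
          (by linarith) hs
        gcongr
    _ = 12 / t * halfStableDensity (t / 4) s := by ring

section BoundedAverage

variable {F : ℝ → ℝ} {M t : ℝ}

theorem hasDerivAt_integral_halfStable (hF : Measurable F) (hM : ∀ s, |F s| ≤ M) (ht : 0 < t) :
    HasDerivAt (fun u => ∫ s, F s ∂halfStable u)
      (∫ s in Ioi 0, halfStableDensityDeriv t s * F s) t := by
  have hdens : IntegrableOn (fun s => halfStableDensity t s * F s) (Ioi 0) :=
    (integrableOn_halfStableDensity ht).mul_bdd hF.aestronglyMeasurable (.of_forall hM)
  have hderiv := hasDerivAt_integral_of_dominated_loc_of_deriv_le (𝕜 := ℝ)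
    (μ := volume.restrict (Ioi 0)) (F := fun u s => halfStableDensity u s * F s)
    (F' := fun u s => halfStableDensityDeriv u s * F s) (x₀ := t) (s := Ioi (t / 2))
    (bound := fun s => 12 / t * halfStableDensity (t / 4) s * M)
    (isOpen_Ioi.mem_nhds (half_lt_self ht))
    (.of_forall fun u => Measurable.aestronglyMeasurable (by fun_prop)) hdens
    (Measurable.aestronglyMeasurable (by unfold halfStableDensityDeriv; fun_prop))
    (by
      filter_upwards [ae_restrict_mem measurableSet_Ioi] with s hs u hu
      rw [norm_mul]
      have hbound := abs_halfStableDensityDeriv_le_of_half_lt ht hu hs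
      exact mul_le_mul hbound (hM s) (norm_nonneg _) ((abs_nonneg _).trans hbound))
    (((integrableOn_halfStableDensity (by positivity)).const_mul _).mul_const _)
    (.of_forall fun s u _ => (hasDerivAt_halfStableDensity u s).mul_const (F s))
  refine hderiv.2.congr_of_eventuallyEq ?_
  filter_upwards [isOpen_Ioi.mem_nhds ht] with u hu using integral_halfStable hu F

theorem abs_deriv_integral_halfStable_le (hF : Measurable F) (hM : ∀ s, |F s| ≤ M) (ht : 0 < t) :
    |deriv (fun u => ∫ s, F s ∂halfStable u) t| ≤ 6 * M / t := by
  rw [(hasDerivAt_integral_halfStable hF hM ht).deriv]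
  calc |∫ s in Ioi 0, halfStableDensityDeriv t s * F s|
      ≤ ∫ s in Ioi 0, 6 / t * halfStableDensity (t / 2) s * M := by
        have hint : IntegrableOn (fun s => 6 / t * halfStableDensity (t / 2) s * M) (Ioi 0) :=
          ((integrableOn_halfStableDensity (half_pos ht)).const_mul _).mul_const _
        refine norm_integral_le_of_norm_le (f := fun s => halfStableDensityDeriv t s * F s) hint ?_
        filter_upwards [ae_restrict_mem measurableSet_Ioi] with s hs
        rw [norm_mul]
        have hbound := abs_halfStableDensityDeriv_le ht hs
        exact mul_le_mul hbound (hM s) (norm_nonneg _) ((abs_nonneg _).trans hbound)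
    _ = 6 * M / t := by
        rw [integral_mul_const, integral_const_mul, integral_halfStableDensity (half_pos ht)]
        ring

end BoundedAverage

end HalfStable

section LaguerreHeat

theorem lintegral_pi_prod_eq_prod {n : ℕ} {X : Fin n → Type*} [∀ i, MeasurableSpace (X i)]
    {μ : ∀ i, Measure (X i)} [∀ i, SigmaFinite (μ i)] {F : ∀ i, X i → ℝ≥0∞}
    (hF : ∀ i, Measurable (F i)) :
    ∫⁻ y, ∏ i, F i (y i) ∂Measure.pi μ = ∏ i, ∫⁻ y, F i y ∂μ i := by
  induction n with
  | zero => simp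
  | succ n ih =>
    have hmp := measurePreserving_piFinSuccAbove μ 0
    have htail : Measurable fun y : ∀ i : Fin n, X i.succ => ∏ i, F i.succ (y i) := by fun_prop
    rw [Fin.prod_univ_succ, ← ih fun i => hF i.succ, ← lintegral_prod_mul (hF 0).aemeasurable
      htail.aemeasurable]
    refine (lintegral_congr fun y => Fin.prod_univ_succ _).trans ?_
    exact hmp.lintegral_comp (f := fun p => F 0 p.1 * ∏ i : Fin n, F i.succ (p.2 i)) (by fun_prop)

@[fun_prop]
theorem measurable_gammaPDF_uncurry (a : ℝ) : Measurable ↿(gammaPDF a) := by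
  refine Measurable.ennreal_ofReal (Measurable.ite ?_ (by fun_prop) measurable_const)
  exact measurableSet_le measurable_const measurable_snd

theorem gammaPDF_mul_ofReal_exp_neg {a r k : ℝ} (hr : 0 < r) (hk : 0 ≤ k) (y : ℝ) :
    gammaPDF a r y * .ofReal (exp (-(k * y))) =
      .ofReal ((r / (r + k)) ^ a) * gammaPDF a (r + k) y := by
  rcases lt_or_ge y 0 with hy | hy
  · simp [gammaPDF_of_neg hy]
  have hrk : 0 < r + k := by positivity
  have hexp : exp (-((r + k) * y)) = exp (-(r * y)) * exp (-(k * y)) := by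
    rw [← exp_add]; ring_nf
  rw [gammaPDF_of_nonneg hy, gammaPDF_of_nonneg hy, ← ENNReal.ofReal_mul' (exp_pos _).le,
    ← ENNReal.ofReal_mul (by positivity), hexp, div_rpow hr.le hrk.le]
  congr 1
  field_simp

theorem setLIntegral_Ioi_gammaPDF {a r : ℝ} (ha : 0 < a) (hr : 0 < r) :
    ∫⁻ y in Ioi 0, gammaPDF a r y = 1 := by
  rw [setLIntegral_congr Ioi_ae_eq_Ici, setLIntegral_eq_of_support_subset,
    lintegral_gammaPDF_eq_one ha hr]
  exact Function.support_subset_iff'.2 fun y hy => gammaPDF_of_neg (not_le.1 hy)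

theorem setLIntegral_Ioi_gammaPDF_mul_exp {a r k : ℝ} (ha : 0 < a) (hr : 0 < r) (hk : 0 ≤ k) :
    ∫⁻ y in Ioi 0, gammaPDF a r y * .ofReal (exp (-(k * y))) = .ofReal ((r / (r + k)) ^ a) := by
  simp_rw [gammaPDF_mul_ofReal_exp_neg hr hk]
  rw [lintegral_const_mul _ (by fun_prop), setLIntegral_Ioi_gammaPDF ha (by positivity), mul_one]

section OneDimensional

variable {a k r r' x y : ℝ}

/-- The one-dimensional Laguerre heat kernel with respect to Lebesgue measure, at time `s` with
`r = exp (-s)`: a mixture of Gamma laws with Poisson weights of mean `r * x / (1 - r)`. -/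
noncomputable def laguerreHeatFactor (a r x y : ℝ) : ℝ≥0∞ :=
  ∑' m : ℕ, .ofReal (exp (-(r * x / (1 - r))) * (r * x / (1 - r)) ^ m / m.factorial) *
    gammaPDF (m + a + 1) (1 - r)⁻¹ y

@[fun_prop]
theorem measurable_laguerreHeatFactor (a : ℝ) : Measurable ↿(laguerreHeatFactor a) := by
  unfold laguerreHeatFactor
  refine Measurable.tsum fun m => ?_
  fun_prop

/-- The Laplace transform at `k` of the one-dimensional Laguerre heat kernel started at `x`, at
time `s` with `r = exp (-s)`. -/
noncomputable def laguerreLaplaceFactor (a k r x : ℝ) : ℝ :=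
  (1 + k * (1 - r)) ^ (-(a + 1)) * exp (-(r * k / (1 + k * (1 - r)) * x))

theorem laguerreLaplaceFactor_nonneg (hk : 0 ≤ k) (hr : r ≤ 1) :
    0 ≤ laguerreLaplaceFactor a k r x := by
  have : 0 ≤ 1 - r := sub_nonneg.2 hr
  unfold laguerreLaplaceFactor
  positivity

theorem hasSum_laguerreLaplaceFactor (hr1 : r < 1) (hk : 0 ≤ k) :
    HasSum (fun m : ℕ => exp (-(r * x / (1 - r))) * (r * x / (1 - r)) ^ m / m.factorial *
      ((1 - r)⁻¹ / ((1 - r)⁻¹ + k)) ^ (m + a + 1)) (laguerreLaplaceFactor a k r x) := by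
  have h1 : 0 < 1 - r := sub_pos.2 hr1
  have hN : 0 < 1 + k * (1 - r) := by positivity
  have hpow (m : ℕ) : ((1 - r)⁻¹ / ((1 - r)⁻¹ + k)) ^ (m + a + 1) =
      (1 + k * (1 - r)) ^ (-(a + 1)) / (1 + k * (1 - r)) ^ m := by
    rw [show (1 - r)⁻¹ / ((1 - r)⁻¹ + k) = (1 + k * (1 - r))⁻¹ by field_simp,
      inv_rpow hN.le, add_assoc, rpow_add hN, rpow_natCast, rpow_neg hN.le]
    field_simp
  have hexp : exp (-(r * x / (1 - r))) * exp (r * x / (1 - r) / (1 + k * (1 - r))) =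
      exp (-(r * k / (1 + k * (1 - r)) * x)) := by
    rw [← exp_add]
    congr 1
    field_simp
    ring
  have hseries := NormedSpace.expSeries_div_hasSum_exp (r * x / (1 - r) / (1 + k * (1 - r)))
  rw [← exp_eq_exp_ℝ] at hseries
  rw [laguerreLaplaceFactor, ← hexp, ← mul_assoc]
  refine (hseries.mul_left _).congr_fun fun m => ?_
  rw [hpow, div_pow (r * x / (1 - r))]
  ring

theorem lintegral_laguerreHeatFactor_mul_exp (ha : -1 < a) (hr : 0 < r) (hr1 : r < 1)
    (hx : 0 ≤ x) (hk : 0 ≤ k) :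
    ∫⁻ y in Ioi 0, laguerreHeatFactor a r x y * .ofReal (exp (-(k * y))) =
      .ofReal (laguerreLaplaceFactor a k r x) := by
  have : 0 < 1 - r := sub_pos.2 hr1
  have hsum := hasSum_laguerreLaplaceFactor (a := a) (x := x) hr1 hk
  simp_rw [laguerreHeatFactor, ← ENNReal.tsum_mul_right]
  rw [lintegral_tsum fun m => by fun_prop, ← hsum.tsum_eq,
    ENNReal.ofReal_tsum_of_nonneg (fun m => by positivity) hsum.summable]
  refine tsum_congr fun m => ?_
  have hm : 0 < m + a + 1 := by linarith [m.cast_nonneg (α := ℝ)]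
  simp_rw [mul_assoc]
  rw [lintegral_const_mul _ (by fun_prop), setLIntegral_Ioi_gammaPDF_mul_exp hm (by positivity) hk,
    ← ENNReal.ofReal_mul (by positivity)]

theorem laguerreLaplaceFactor_mul (hk : 0 ≤ k) (hr : 0 < r) (hr1 : r ≤ 1) (hr' : 0 < r')
    (hr'1 : r' ≤ 1) :
    (1 + k * (1 - r')) ^ (-(a + 1)) *
        laguerreLaplaceFactor a (r' * k / (1 + k * (1 - r'))) r x =
      laguerreLaplaceFactor a k (r * r') x := by
  have hN' : 0 < 1 + k * (1 - r') := by have := sub_nonneg.2 hr'1; positivity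
  have hN : 0 < 1 + k * (1 - r * r') := by
    have := sub_nonneg.2 (mul_le_one₀ hr1 hr'.le hr'1); positivity
  have hdiv : 1 + r' * k / (1 + k * (1 - r')) * (1 - r) =
      (1 + k * (1 - r * r')) / (1 + k * (1 - r')) := by
    field_simp
    ring
  rw [laguerreLaplaceFactor, laguerreLaplaceFactor, ← mul_assoc, hdiv,
    ← mul_rpow hN'.le (by positivity), mul_div_cancel₀ _ hN'.ne']
  congr 3
  field_simp

theorem laguerreHeatFactor_symm (hr : 0 ≤ r) (hr1 : r < 1) (hx : 0 < x) (hy : 0 < y) :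
    .ofReal (x ^ a * exp (-x)) * laguerreHeatFactor a r x y =
      .ofReal (y ^ a * exp (-y)) * laguerreHeatFactor a r y x := by
  have h1 : 0 < 1 - r := sub_pos.2 hr1
  have hexp (u : ℝ) : exp (-u) * exp (-(r * u / (1 - r))) = exp (-((1 - r)⁻¹ * u)) := by
    rw [← exp_add]
    congr 1
    field_simp
    ring
  simp_rw [laguerreHeatFactor, ← ENNReal.tsum_mul_left]
  refine tsum_congr fun m => ?_
  rw [gammaPDF_of_nonneg hx.le, gammaPDF_of_nonneg hy.le, ← ENNReal.ofReal_mul (by positivity),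
    ← ENNReal.ofReal_mul (by positivity), ← ENNReal.ofReal_mul (by positivity),
    ← ENNReal.ofReal_mul (by positivity), add_sub_cancel_right, rpow_add hx, rpow_add hy,
    rpow_natCast, rpow_natCast, ← hexp x, ← hexp y]
  congr 1
  ring

end OneDimensional

theorem volume_restrict_posOrthant (d : ℕ) :
    (volume : Measure (Fin d → ℝ)).restrict (posOrthant d) =
      Measure.pi fun _ => (volume : Measure ℝ).restrict (Ioi 0) := by
  rw [posOrthant, volume_pi, Measure.restrict_pi_pi]

theorem measurableSet_posOrthant (d : ℕ) : MeasurableSet (posOrthant d) :=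
  .univ_pi fun _ => measurableSet_Ioi

theorem mem_posOrthant {d : ℕ} {x : Fin d → ℝ} : x ∈ posOrthant d ↔ ∀ j, 0 < x j := by
  simp [posOrthant]

section

variable {d : ℕ} (α : Fin d → ℝ)

/-- The Laplace transform at `k` of the Laguerre heat kernel started at `x`, at time `s` with
`r = exp (-s)`. -/
noncomputable def laguerreLaplace (k : Fin d → ℝ) (r : ℝ) (x : Fin d → ℝ) : ℝ :=
  ∏ j, laguerreLaplaceFactor (α j) (k j) r (x j)

/-- The Laguerre heat kernel at time `p.1` started at `p.2` with respect to Lebesgue measure. For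
nonpositive times and outside the orthant it is defined through `posTime` and `|p.2|`. -/
noncomputable def laguerreHeatDensity (p : ℝ × (Fin d → ℝ)) (y : Fin d → ℝ) : ℝ≥0∞ :=
  ∏ j, laguerreHeatFactor (α j) (exp (-posTime p.1)) (|p.2| j) (y j)

@[fun_prop]
theorem measurable_laguerreHeatDensity : Measurable ↿(laguerreHeatDensity α) := by
  unfold laguerreHeatDensity
  simp only [Pi.abs_apply]
  fun_prop

/-- The Laguerre heat semigroup as a kernel, from the pair of a time and a starting point. -/
noncomputable def laguerreHeat : Kernel (ℝ × (Fin d → ℝ)) (Fin d → ℝ) :=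
  (Kernel.const _ (volume.restrict (posOrthant d))).withDensity (laguerreHeatDensity α)

theorem laguerreHeat_apply (p : ℝ × (Fin d → ℝ)) :
    laguerreHeat α p = (volume.restrict (posOrthant d)).withDensity (laguerreHeatDensity α p) := by
  rw [laguerreHeat, Kernel.withDensity_apply _ (measurable_laguerreHeatDensity α),
    Kernel.const_apply]

theorem laguerreHeat_absolutelyContinuous (p : ℝ × (Fin d → ℝ)) :
    laguerreHeat α p ≪ volume.restrict (posOrthant d) := by
  rw [laguerreHeat_apply]
  exact withDensity_absolutelyContinuous _ _

theorem ae_laguerreHeat_mem_posOrthant (p : ℝ × (Fin d → ℝ)) :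
    ∀ᵐ y ∂laguerreHeat α p, y ∈ posOrthant d :=
  (laguerreHeat_absolutelyContinuous α p).ae_le (ae_restrict_mem (measurableSet_posOrthant d))

theorem lintegral_laguerreHeat (p : ℝ × (Fin d → ℝ)) {g : (Fin d → ℝ) → ℝ≥0∞}
    (hg : Measurable g) :
    ∫⁻ y, g y ∂laguerreHeat α p = ∫⁻ y in posOrthant d, laguerreHeatDensity α p y * g y := by
  rw [laguerreHeat_apply, lintegral_withDensity_eq_lintegral_mul _
    (measurable_laguerreHeatDensity α).of_uncurry_left hg]
  rfl

variable {α} [hα : Fact (∀ j, -1 < α j)]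
include hα

theorem lintegral_exp_laguerreHeat {k : Fin d → ℝ} (hk : ∀ j, 0 ≤ k j) (p : ℝ × (Fin d → ℝ)) :
    ∫⁻ y, .ofReal (exp (-∑ j, k j * y j)) ∂laguerreHeat α p =
      .ofReal (laguerreLaplace α k (exp (-posTime p.1)) |p.2|) := by
  have hr : exp (-posTime p.1) < 1 := by simpa using posTime_pos p.1
  have hprod (y : Fin d → ℝ) : laguerreHeatDensity α p y * .ofReal (exp (-∑ j, k j * y j)) =
      ∏ j, (laguerreHeatFactor (α j) (exp (-posTime p.1)) (|p.2| j) (y j) *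
        .ofReal (exp (-(k j * y j)))) := by
    rw [Finset.prod_mul_distrib, ← ENNReal.ofReal_prod_of_nonneg fun _ _ => (exp_pos _).le,
      ← exp_sum, Finset.sum_neg_distrib, laguerreHeatDensity]
  simp_rw [lintegral_laguerreHeat α p (g := fun y => .ofReal (exp (-∑ j, k j * y j))) (by fun_prop),
    hprod]
  rw [volume_restrict_posOrthant, lintegral_pi_prod_eq_prod (F := fun j y =>
    laguerreHeatFactor (α j) (exp (-posTime p.1)) (|p.2| j) y * .ofReal (exp (-(k j * y))))
    fun j => by fun_prop, laguerreLaplace, ENNReal.ofReal_prod_of_nonneg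
    fun j _ => laguerreLaplaceFactor_nonneg (hk j) hr.le]
  exact Finset.prod_congr rfl fun j _ =>
    lintegral_laguerreHeatFactor_mul_exp (hα.out j) (exp_pos _) hr (abs_nonneg _) (hk j)

instance : IsMarkovKernel (laguerreHeat α) :=
  ⟨fun p => ⟨by simpa [laguerreLaplace, laguerreLaplaceFactor] using
    lintegral_exp_laguerreHeat (α := α) (k := 0) (fun _ => le_rfl) p⟩⟩

theorem lintegral_laguerreLaplace_laguerreHeat {k : Fin d → ℝ} (hk : ∀ j, 0 ≤ k j) {s r' : ℝ}
    (hs : 0 < s) (hr' : 0 < r') (hr'1 : r' ≤ 1) (x : Fin d → ℝ) :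
    ∫⁻ z, .ofReal (laguerreLaplace α k r' |z|) ∂laguerreHeat α (s, x) =
      .ofReal (laguerreLaplace α k (exp (-s) * r') |x|) := by
  have : 0 ≤ 1 - r' := sub_nonneg.2 hr'1
  set k' : Fin d → ℝ := fun j => r' * k j / (1 + k j * (1 - r'))
  have hk' (j) : 0 ≤ k' j := by have := hk j; positivity
  set B : ℝ := ∏ j, (1 + k j * (1 - r')) ^ (-(α j + 1))
  have hB : 0 ≤ B := Finset.prod_nonneg fun j _ => by have := hk j; positivity
  have hexp : ∀ᵐ z ∂laguerreHeat α (s, x), ENNReal.ofReal (laguerreLaplace α k r' |z|) =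
      .ofReal B * .ofReal (exp (-∑ j, k' j * z j)) := by
    filter_upwards [ae_laguerreHeat_mem_posOrthant α (s, x)] with z hz
    rw [← ENNReal.ofReal_mul hB, laguerreLaplace, ← Finset.sum_neg_distrib, exp_sum,
      ← Finset.prod_mul_distrib]
    simp only [laguerreLaplaceFactor, Pi.abs_apply, abs_of_pos (mem_posOrthant.1 hz _), k']
  rw [lintegral_congr_ae hexp, lintegral_const_mul _ (by fun_prop),
    lintegral_exp_laguerreHeat hk', ← ENNReal.ofReal_mul hB, posTime_of_pos hs,
    laguerreLaplace, ← Finset.prod_mul_distrib, laguerreLaplace]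
  congr 1
  exact Finset.prod_congr rfl fun j _ =>
    laguerreLaplaceFactor_mul (hk j) (exp_pos _) (by simpa using hs.le) hr' hr'1

theorem laguerreHeat_comp_laguerreHeat {s s' : ℝ} (hs : 0 < s) (hs' : 0 < s') :
    (laguerreHeat α).sectR s' ∘ₖ (laguerreHeat α).sectR s = (laguerreHeat α).sectR (s + s') := by
  ext1 x
  have hpos (p : ℝ × (Fin d → ℝ)) : ∀ᵐ y ∂laguerreHeat α p, ∀ j, 0 ≤ y j :=
    (ae_laguerreHeat_mem_posOrthant α p).mono fun y hy j => (mem_posOrthant.1 hy j).le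
  have hmeas : MeasurableSet {y : Fin d → ℝ | ∀ j, 0 ≤ y j} :=
    measurableSet_Ici (a := (0 : Fin d → ℝ))
  refine ext_of_laplace_eq (φ := fun y : Fin d → ℝ => y) (by fun_prop) (fun _ _ h => h)
    ((Kernel.ae_comp_iff hmeas).2 (.of_forall fun z => hpos _)) (hpos _) fun k => ?_
  have hk (j) : (0 : ℝ) ≤ k j := Nat.cast_nonneg _
  rw [Kernel.lintegral_comp _ _ _ (by fun_prop)]
  simp_rw [Kernel.sectR_apply, lintegral_exp_laguerreHeat hk, posTime_of_pos (add_pos hs hs'),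
    posTime_of_pos hs']
  rw [lintegral_laguerreLaplace_laguerreHeat hk hs (exp_pos _) (by simpa using hs'.le),
    neg_add, exp_add]

end

end LaguerreHeat

section LaguerrePoisson

variable {d : ℕ} (α : Fin d → ℝ)

/-- The Laguerre heat semigroup acting on functions; the argument `p` is a time and a point. -/
noncomputable def laguerreHeatOp (f : (Fin d → ℝ) → ℝ) (p : ℝ × (Fin d → ℝ)) : ℝ :=
  ∫ y, f y ∂laguerreHeat α p

/-- The Poisson–Laguerre semigroup as a kernel, obtained from the heat semigroup by subordination:
the heat flow is stopped at an independent random time of law `halfStable t`. -/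
noncomputable def laguerrePoisson : Kernel (ℝ × (Fin d → ℝ)) (Fin d → ℝ) :=
  laguerreHeat α ∘ₖ (halfStable ∥ₖ Kernel.id)

/-- The Poisson–Laguerre semigroup acting on functions through its kernel. -/
noncomputable def laguerrePoissonOp (t : ℝ) (f : (Fin d → ℝ) → ℝ) (x : Fin d → ℝ) : ℝ :=
  ∫ y, f y ∂laguerrePoisson α (t, x)

theorem halfStable_parallelComp_id_apply (t : ℝ) (x : Fin d → ℝ) :
    (halfStable ∥ₖ Kernel.id) (t, x) = (halfStable t).map fun s => (s, x) := by
  rw [Kernel.parallelComp_apply, Kernel.id_apply, Measure.prod_dirac]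

theorem lintegral_laguerrePoisson (t : ℝ) (x : Fin d → ℝ) {g : (Fin d → ℝ) → ℝ≥0∞}
    (hg : Measurable g) :
    ∫⁻ y, g y ∂laguerrePoisson α (t, x) =
      ∫⁻ s, ∫⁻ y, g y ∂laguerreHeat α (s, x) ∂halfStable t := by
  rw [laguerrePoisson, Kernel.lintegral_comp _ _ _ hg, halfStable_parallelComp_id_apply,
    lintegral_map hg.lintegral_kernel (by fun_prop)]

theorem laguerrePoisson_apply_apply (t : ℝ) (x : Fin d → ℝ) {S : Set (Fin d → ℝ)}
    (hS : MeasurableSet S) :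
    laguerrePoisson α (t, x) S = ∫⁻ s, laguerreHeat α (s, x) S ∂halfStable t := by
  simpa [lintegral_indicator_one hS] using
    lintegral_laguerrePoisson α t x (measurable_one.indicator hS)

theorem laguerrePoisson_absolutelyContinuous (p : ℝ × (Fin d → ℝ)) :
    laguerrePoisson α p ≪ volume.restrict (posOrthant d) := by
  refine .mk fun S hS h0 => ?_
  simp_rw [laguerrePoisson_apply_apply α p.1 p.2 hS, laguerreHeat_absolutelyContinuous α _ h0,
    lintegral_zero]

theorem laguerrePoissonOp_congr {f g : (Fin d → ℝ) → ℝ}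
    (hfg : f =ᵐ[volume.restrict (posOrthant d)] g) (t : ℝ) (x : Fin d → ℝ) :
    laguerrePoissonOp α t f x = laguerrePoissonOp α t g x :=
  integral_congr_ae ((laguerrePoisson_absolutelyContinuous α (t, x)).ae_le hfg)

theorem abs_integral_le_of_ae_abs_le {X : Type*} [MeasurableSpace X] {μ : Measure X}
    [IsProbabilityMeasure μ] {f : X → ℝ} {M : ℝ} (hM : ∀ᵐ y ∂μ, |f y| ≤ M) :
    |∫ y, f y ∂μ| ≤ M := by
  simpa using norm_integral_le_of_norm_le_const (f := f) hM

variable {α} {f : (Fin d → ℝ) → ℝ} {M : ℝ}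

theorem ae_laguerreHeat_abs_le (hM : ∀ y ∈ posOrthant d, |f y| ≤ M) (p : ℝ × (Fin d → ℝ)) :
    ∀ᵐ y ∂laguerreHeat α p, |f y| ≤ M :=
  (ae_laguerreHeat_mem_posOrthant α p).mono hM

theorem ae_laguerrePoisson_abs_le (hM : ∀ y ∈ posOrthant d, |f y| ≤ M) (p : ℝ × (Fin d → ℝ)) :
    ∀ᵐ y ∂laguerrePoisson α p, |f y| ≤ M :=
  (laguerrePoisson_absolutelyContinuous α p).ae_le
    ((ae_restrict_mem (measurableSet_posOrthant d)).mono hM)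

theorem measurable_laguerreHeatOp (hf : Measurable f) : Measurable (laguerreHeatOp α f) :=
  hf.stronglyMeasurable.integral_kernel.measurable

theorem measurable_laguerrePoissonOp_comp {X : Type*} [MeasurableSpace X] {s : X → ℝ}
    {g : X → Fin d → ℝ} (hf : Measurable f) (hs : Measurable s) (hg : Measurable g) :
    Measurable fun a => laguerrePoissonOp α (s a) f (g a) :=
  (hf.stronglyMeasurable.integral_kernel (κ := laguerrePoisson α)).measurable.comp (hs.prodMk hg)

theorem measurable_laguerrePoissonOp (hf : Measurable f) (t : ℝ) :
    Measurable (laguerrePoissonOp α t f) :=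
  measurable_laguerrePoissonOp_comp hf measurable_const measurable_id

variable [hα : Fact (∀ j, -1 < α j)]
include hα

instance : IsMarkovKernel (laguerrePoisson α) := by
  unfold laguerrePoisson; infer_instance

theorem abs_laguerreHeatOp_le (hM : ∀ y ∈ posOrthant d, |f y| ≤ M) (p : ℝ × (Fin d → ℝ)) :
    |laguerreHeatOp α f p| ≤ M :=
  abs_integral_le_of_ae_abs_le (ae_laguerreHeat_abs_le hM p)

theorem abs_laguerrePoissonOp_le (hM : ∀ y ∈ posOrthant d, |f y| ≤ M) (t : ℝ) (x : Fin d → ℝ) :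
    |laguerrePoissonOp α t f x| ≤ M :=
  abs_integral_le_of_ae_abs_le (ae_laguerrePoisson_abs_le hM (t, x))

theorem integrable_laguerrePoisson (hf : Measurable f) (hM : ∀ y ∈ posOrthant d, |f y| ≤ M)
    (p : ℝ × (Fin d → ℝ)) : Integrable f (laguerrePoisson α p) :=
  .of_bound hf.aestronglyMeasurable M (ae_laguerrePoisson_abs_le hM p)

theorem laguerrePoissonOp_eq_integral_halfStable (hf : Measurable f)
    (hM : ∀ y ∈ posOrthant d, |f y| ≤ M) (t : ℝ) (x : Fin d → ℝ) :
    laguerrePoissonOp α t f x = ∫ s, laguerreHeatOp α f (s, x) ∂halfStable t := by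
  rw [laguerrePoissonOp, laguerrePoisson,
    Kernel.integral_comp (by exact integrable_laguerrePoisson hf hM (t, x)),
    halfStable_parallelComp_id_apply]
  exact integral_map (by fun_prop) (measurable_laguerreHeatOp hf).aestronglyMeasurable

theorem differentiableAt_laguerrePoissonOp (hf : Measurable f)
    (hM : ∀ y ∈ posOrthant d, |f y| ≤ M) {t : ℝ} (ht : 0 < t) (x : Fin d → ℝ) :
    DifferentiableAt ℝ (fun u => laguerrePoissonOp α u f x) t := by
  simp_rw [laguerrePoissonOp_eq_integral_halfStable hf hM]
  exact (hasDerivAt_integral_halfStable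
    ((measurable_laguerreHeatOp hf).comp measurable_prodMk_right)
    (fun s => abs_laguerreHeatOp_le hM (s, x)) ht).differentiableAt

theorem abs_deriv_laguerrePoissonOp_le (hf : Measurable f)
    (hM : ∀ y ∈ posOrthant d, |f y| ≤ M) {t : ℝ} (ht : 0 < t) (x : Fin d → ℝ) :
    |deriv (fun u => laguerrePoissonOp α u f x) t| ≤ 6 * M / t := by
  simp_rw [laguerrePoissonOp_eq_integral_halfStable hf hM]
  exact abs_deriv_integral_halfStable_le
    ((measurable_laguerreHeatOp hf).comp measurable_prodMk_right)
    (fun s => abs_laguerreHeatOp_le hM (s, x)) ht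

theorem laguerrePoisson_comp_laguerrePoisson {a b : ℝ} (ha : 0 < a) (hb : 0 < b) :
    (laguerrePoisson α).sectR b ∘ₖ (laguerrePoisson α).sectR a =
      (laguerrePoisson α).sectR (a + b) := by
  refine Kernel.ext_fun fun x g hg => ?_
  have : Measurable fun p => ∫⁻ y, g y ∂laguerreHeat α p := hg.lintegral_kernel
  rw [Kernel.lintegral_comp _ _ _ hg]
  simp_rw [Kernel.sectR_apply, lintegral_laguerrePoisson α _ _ hg]
  rw [lintegral_laguerrePoisson α _ _ (Measurable.lintegral_prod_right (by fun_prop)),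
    ← halfStable_conv_halfStable ha hb, Measure.lintegral_conv (by fun_prop)]
  refine lintegral_congr_ae ?_
  filter_upwards [ae_halfStable_pos a] with s hs
  rw [lintegral_lintegral_swap (by fun_prop)]
  refine lintegral_congr_ae ?_
  filter_upwards [ae_halfStable_pos b] with s' hs'
  rw [← Kernel.sectR_apply _ _ (s + s'), ← laguerreHeat_comp_laguerreHeat hs hs',
    Kernel.lintegral_comp _ _ _ hg]
  rfl

theorem laguerrePoissonOp_laguerrePoissonOp (hf : Measurable f)
    (hM : ∀ y ∈ posOrthant d, |f y| ≤ M) {a b : ℝ} (ha : 0 < a) (hb : 0 < b) (x : Fin d → ℝ) :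
    laguerrePoissonOp α a (laguerrePoissonOp α b f) x = laguerrePoissonOp α (a + b) f x := by
  have hint := integrable_laguerrePoisson (α := α) hf hM (a + b, x)
  rw [← Kernel.sectR_apply, ← laguerrePoisson_comp_laguerrePoisson ha hb] at hint
  rw [laguerrePoissonOp.eq_def α (a + b), ← Kernel.sectR_apply,
    ← laguerrePoisson_comp_laguerrePoisson ha hb, Kernel.integral_comp hint]
  rfl

end LaguerrePoisson

section KernelIdentification

/-- Everything is a product of powers, so that the identity becomes linear in the logarithms of
`x`, `y`, `r` and `1 - r`. -/
theorem bessel_powers_eq (a : ℝ) {r x y : ℝ} (hr : 0 < r) (hr1 : r < 1) (hx : 0 < x) (hy : 0 < y)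
    (m : ℕ) :
    (1 - r)⁻¹ * ((y / x) ^ (a / 2) * exp (-(a * log r / 2)) *
        (√(r * x * y) / (1 - r)) ^ (2 * (m : ℝ) + a)) =
      (r * x / (1 - r)) ^ m * ((1 - r)⁻¹ ^ (m + a + 1) * y ^ (m + a)) := by
  obtain ⟨Q, hQ⟩ : ∃ Q, exp Q = 1 - r := ⟨_, exp_log (sub_pos.2 hr1)⟩
  rw [← hQ]
  obtain ⟨X, rfl⟩ : ∃ X, exp X = x := ⟨_, exp_log hx⟩
  obtain ⟨Y, rfl⟩ : ∃ Y, exp Y = y := ⟨_, exp_log hy⟩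
  obtain ⟨R, rfl⟩ : ∃ R, exp R = r := ⟨_, exp_log hr⟩
  simp only [sqrt_eq_rpow, ← rpow_natCast, log_exp, ← exp_neg, ← exp_add, ← exp_sub, ← exp_mul]
  congr 1
  ring

theorem besselI_eq_laguerreHeatFactor {a : ℝ} (ha : -1 < a) {r x y : ℝ} (hr : 0 < r) (hr1 : r < 1)
    (hx : 0 < x) (hy : 0 < y) :
    (1 - r)⁻¹ * ((y / x) ^ (a / 2) * exp (-((r * x + y) / (1 - r)) - a * log r / 2) *
      besselI a (2 * √(r * x * y) / (1 - r))) = (laguerreHeatFactor a r x y).toReal := by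
  have : 0 < 1 - r := sub_pos.2 hr1
  have hterm (u v : ℝ) : ENNReal.ofReal u * gammaPDF v (1 - r)⁻¹ y ≠ ⊤ :=
    ENNReal.mul_ne_top ENNReal.ofReal_ne_top ENNReal.ofReal_ne_top
  rw [laguerreHeatFactor, ENNReal.tsum_toReal_eq fun _ => hterm _ _, besselI, ← mul_assoc,
    ← tsum_mul_left]
  refine tsum_congr fun m => ?_
  have hm : 0 < m + a + 1 := by linarith [m.cast_nonneg (α := ℝ)]
  have hexp : exp (-((r * x + y) / (1 - r)) - a * log r / 2) =
      exp (-(r * x / (1 - r))) * exp (-((1 - r)⁻¹ * y)) * exp (-(a * log r / 2)) := by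
    rw [← exp_add, ← exp_add]
    congr 1
    ring
  rw [ENNReal.toReal_mul, ENNReal.toReal_ofReal (by positivity), gammaPDF_of_nonneg hy.le,
    ENNReal.toReal_ofReal (by positivity [Gamma_pos_of_pos hm]), hexp, add_sub_cancel_right,
    show 2 * √(r * x * y) / (1 - r) / 2 = √(r * x * y) / (1 - r) by ring]
  linear_combination exp (-(r * x / (1 - r))) * exp (-((1 - r)⁻¹ * y)) /
    (m.factorial * Gamma (m + a + 1)) * bessel_powers_eq a hr hr1 hx hy m

theorem image_exp_neg_Ioi_zero : (fun s : ℝ => exp (-s)) '' Ioi 0 = Ioo 0 1 := by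
  ext r
  constructor
  · rintro ⟨s, hs, rfl⟩
    exact ⟨exp_pos _, by simpa using hs⟩
  · rintro ⟨h0, h1⟩
    exact ⟨-log r, by simpa using log_neg h0 h1, by simp [exp_log h0]⟩

theorem setIntegral_Ioo_zero_one_eq (g : ℝ → ℝ) :
    ∫ r in Ioo 0 1, g r = ∫ s in Ioi 0, exp (-s) * g (exp (-s)) := by
  rw [← image_exp_neg_Ioi_zero, integral_image_eq_integral_abs_deriv_smul
    (f' := fun s => -exp (-s)) measurableSet_Ioi
    (fun s _ => by simpa using (hasDerivAt_neg s).exp.hasDerivWithinAt)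
    (fun a _ b _ h => by simpa using h)]
  simp

variable {d : ℕ} {α : Fin d → ℝ} {t : ℝ} {x y : Fin d → ℝ}

theorem plKernel_eq_integral_laguerreHeatDensity (hα : ∀ j, -1 < α j) (hx : x ∈ posOrthant d)
    (hy : y ∈ posOrthant d) :
    plKernel d α t x y =
      ∫ s in Ioi 0, halfStableDensity t s * (laguerreHeatDensity α (s, x) y).toReal := by
  rw [mem_posOrthant] at hx hy
  rw [plKernel, setIntegral_Ioo_zero_one_eq, ← integral_const_mul]
  refine setIntegral_congr_fun measurableSet_Ioi fun s (hs : 0 < s) => ?_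
  have hs1 : exp (-s) < 1 := by simpa using hs
  have h1 : 1 - exp (-s) ≠ 0 := (sub_pos.2 hs1).ne'
  have hsgn : t ^ 2 / (4 * -s) = -(t ^ 2 / (4 * s)) := by rw [mul_neg, div_neg]
  simp_rw [laguerreHeatDensity, ENNReal.toReal_prod, Pi.abs_apply, posTime_of_pos hs,
    abs_of_pos (hx _), ← besselI_eq_laguerreHeatFactor (hα _) (exp_pos (-s)) hs1 (hx _) (hy _)]
  rw [Finset.prod_mul_distrib (f := fun _ => (1 - exp (-s))⁻¹), Finset.prod_const,
    Finset.card_univ, Fintype.card_fin, halfStableDensity]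
  simp only [log_exp, neg_neg, hsgn, inv_pow]
  field_simp

theorem laguerrePoisson_eq_withDensity (α : Fin d → ℝ) (t : ℝ) (x : Fin d → ℝ) :
    laguerrePoisson α (t, x) = (volume.restrict (posOrthant d)).withDensity fun y =>
      ∫⁻ s, laguerreHeatDensity α (s, x) y ∂halfStable t := by
  refine Measure.ext_of_lintegral _ fun g hg => ?_
  rw [lintegral_laguerrePoisson α t x hg, lintegral_withDensity_eq_lintegral_mul _
    (Measurable.lintegral_prod_left (by fun_prop)) hg]
  simp_rw [lintegral_laguerreHeat α _ hg]
  rw [lintegral_lintegral_swap (by fun_prop)]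
  refine lintegral_congr fun y => ?_
  rw [Pi.mul_apply, lintegral_mul_const _ (by fun_prop)]

theorem plKernel_eq_toReal (hα : ∀ j, -1 < α j) (ht : 0 < t) (hx : x ∈ posOrthant d)
    (hy : y ∈ posOrthant d) (hfin : ∫⁻ s, laguerreHeatDensity α (s, x) y ∂halfStable t < ⊤) :
    plKernel d α t x y = (∫⁻ s, laguerreHeatDensity α (s, x) y ∂halfStable t).toReal := by
  have hmeas : Measurable fun s => laguerreHeatDensity α (s, x) y := by fun_prop
  rw [← integral_toReal hmeas.aemeasurable (ae_lt_top hmeas hfin.ne), integral_halfStable ht,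
    plKernel_eq_integral_laguerreHeatDensity hα hx hy]

theorem plP_eq_laguerrePoissonOp [hα : Fact (∀ j, -1 < α j)] (ht : 0 < t) (f : (Fin d → ℝ) → ℝ)
    (hx : x ∈ posOrthant d) : plP d α t f x = laguerrePoissonOp α t f x := by
  have hmeas : Measurable fun y => ∫⁻ s, laguerreHeatDensity α (s, x) y ∂halfStable t :=
    Measurable.lintegral_prod_left (by fun_prop)
  have hmass : ∫⁻ y in posOrthant d, ∫⁻ s, laguerreHeatDensity α (s, x) y ∂halfStable t = 1 := by
    rw [← setLIntegral_univ, ← withDensity_apply _ .univ, ← laguerrePoisson_eq_withDensity,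
      measure_univ]
  have hfin := ae_lt_top hmeas (hmass.trans_ne ENNReal.one_ne_top)
  rw [plP, if_neg ht.ne', laguerrePoissonOp, laguerrePoisson_eq_withDensity,
    integral_withDensity_eq_integral_toReal_smul hmeas hfin]
  refine integral_congr_ae ?_
  filter_upwards [hfin, ae_restrict_mem (measurableSet_posOrthant d)] with y hy hyd
  rw [plKernel_eq_toReal hα.out ht hx hyd hy, smul_eq_mul]

end KernelIdentification

section Reversibility

section General

variable {X : Type*} [MeasurableSpace X] {κ : Kernel X X} [IsFiniteKernel κ] {μ : Measure X}
  [IsFiniteMeasure μ]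

theorem map_swap_compProd_of_isReversible (h : κ.IsReversible μ) :
    (μ ⊗ₘ κ).map Prod.swap = μ ⊗ₘ κ := by
  refine Measure.ext_prod fun {A B} hA hB => ?_
  rw [Measure.map_apply measurable_swap (hA.prod hB), preimage_swap_prod,
    Measure.compProd_apply_prod hB hA, Measure.compProd_apply_prod hA hB, h hB hA]

theorem integral_mul_integral_comm_of_isReversible (h : κ.IsReversible μ) {f g : X → ℝ}
    (hfg : Integrable (fun p => f p.1 * g p.2) (μ ⊗ₘ κ)) :
    ∫ x, f x * ∫ y, g y ∂κ x ∂μ = ∫ x, g x * ∫ y, f y ∂κ x ∂μ := by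
  have hgf : Integrable (fun p => g p.1 * f p.2) (μ ⊗ₘ κ) := by
    rw [← map_swap_compProd_of_isReversible h] at hfg
    simpa [Function.comp_def, mul_comm] using hfg.comp_measurable measurable_swap
  simp_rw [← integral_const_mul]
  rw [← Measure.integral_compProd hfg, ← Measure.integral_compProd hgf]
  conv_lhs => rw [← map_swap_compProd_of_isReversible h]
  rw [integral_map measurable_swap.aemeasurable (by
    rw [map_swap_compProd_of_isReversible h]; exact hfg.aestronglyMeasurable)]
  simp [mul_comm]

end General

variable {d : ℕ} (α : Fin d → ℝ)

/-- The density `∏ j, x j ^ α j * exp (-x j)` of the Laguerre measure. -/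
noncomputable def laguerreWeight (x : Fin d → ℝ) : ℝ≥0∞ :=
  ∏ j, .ofReal (x j ^ α j * exp (-x j))

@[fun_prop]
theorem measurable_laguerreWeight : Measurable (laguerreWeight α) := by
  unfold laguerreWeight
  fun_prop

/-- The Laguerre measure on the positive orthant, for which the Laguerre semigroups are
symmetric. -/
noncomputable def laguerreMeasure : Measure (Fin d → ℝ) :=
  (volume.restrict (posOrthant d)).withDensity (laguerreWeight α)

theorem ae_laguerreMeasure_mem_posOrthant : ∀ᵐ y ∂laguerreMeasure α, y ∈ posOrthant d :=
  (withDensity_absolutelyContinuous _ _).ae_le (ae_restrict_mem (measurableSet_posOrthant d))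

theorem absolutelyContinuous_laguerreMeasure :
    volume.restrict (posOrthant d) ≪ laguerreMeasure α := by
  refine withDensity_absolutelyContinuous' (by fun_prop) ?_
  filter_upwards [ae_restrict_mem (measurableSet_posOrthant d)] with y hy
  refine Finset.prod_ne_zero_iff.2 fun j _ => ?_
  have hj := mem_posOrthant.1 hy j
  simp only [ne_eq, ENNReal.ofReal_eq_zero, not_le]
  positivity

theorem laguerreHeatDensity_symm (s : ℝ) {x y : Fin d → ℝ} (hx : x ∈ posOrthant d)
    (hy : y ∈ posOrthant d) :
    laguerreWeight α x * laguerreHeatDensity α (s, x) y =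
      laguerreWeight α y * laguerreHeatDensity α (s, y) x := by
  rw [mem_posOrthant] at hx hy
  simp_rw [laguerreWeight, laguerreHeatDensity, ← Finset.prod_mul_distrib, Pi.abs_apply,
    abs_of_pos (hx _), abs_of_pos (hy _)]
  exact Finset.prod_congr rfl fun j _ =>
    laguerreHeatFactor_symm (exp_pos _).le (by simpa using posTime_pos s) (hx j) (hy j)

theorem isReversible_laguerreHeat (s : ℝ) :
    ((laguerreHeat α).sectR s).IsReversible (laguerreMeasure α) := by
  intro A B hA hB
  have hset {A B : Set (Fin d → ℝ)} (hA : MeasurableSet A) (hB : MeasurableSet B) :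
      ∫⁻ x in A, (laguerreHeat α).sectR s x B ∂laguerreMeasure α =
        ∫⁻ x in A, ∫⁻ y in B, laguerreWeight α x * laguerreHeatDensity α (s, x) y
          ∂volume.restrict (posOrthant d) ∂volume.restrict (posOrthant d) := by
    rw [laguerreMeasure, setLIntegral_withDensity_eq_setLIntegral_mul _ (by fun_prop)
      (Kernel.measurable_coe _ hB) hA]
    refine lintegral_congr fun x => ?_
    rw [Pi.mul_apply, Kernel.sectR_apply, laguerreHeat_apply, withDensity_apply _ hB,
      lintegral_const_mul _ (by fun_prop)]
  rw [hset hA hB, hset hB hA, lintegral_lintegral_swap (by fun_prop)]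
  have hmem {S : Set (Fin d → ℝ)} :
      ∀ᵐ x ∂(volume.restrict (posOrthant d)).restrict S, x ∈ posOrthant d :=
    ae_restrict_of_ae (ae_restrict_mem (measurableSet_posOrthant d))
  refine lintegral_congr_ae (hmem.mono fun y hy => lintegral_congr_ae (hmem.mono fun x hx => ?_))
  exact laguerreHeatDensity_symm α s hx hy

variable [hα : Fact (∀ j, -1 < α j)]
include hα

instance : IsFiniteMeasure (laguerreMeasure α) := by
  refine isFiniteMeasure_withDensity ?_
  simp_rw [volume_restrict_posOrthant, laguerreWeight]
  rw [lintegral_pi_prod_eq_prod (F := fun j y => .ofReal (y ^ α j * exp (-y)))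
    fun j => by fun_prop]
  refine ENNReal.prod_ne_top fun j _ => (lt_of_le_of_lt (lintegral_mono fun y => ?_)
    (GammaIntegral_convergent (s := α j + 1) (by linarith [hα.out j])).2).ne
  rw [add_sub_cancel_right, mul_comm]
  exact ofReal_le_enorm _

theorem isReversible_laguerrePoisson (t : ℝ) :
    ((laguerrePoisson α).sectR t).IsReversible (laguerreMeasure α) := by
  have hswap {A B : Set (Fin d → ℝ)} (hB : MeasurableSet B) :
      ∫⁻ x in A, (laguerrePoisson α).sectR t x B ∂laguerreMeasure α =
        ∫⁻ s, ∫⁻ x in A, (laguerreHeat α).sectR s x B ∂laguerreMeasure α ∂halfStable t := by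
    simp_rw [Kernel.sectR_apply, laguerrePoisson_apply_apply α t _ hB]
    exact lintegral_lintegral_swap
      (((laguerreHeat α).measurable_coe hB).comp measurable_swap).aemeasurable
  intro A B hA hB
  rw [hswap hB, hswap hA]
  exact lintegral_congr fun s => isReversible_laguerreHeat α s hA hB

end Reversibility

section BoundaryValue

variable {d : ℕ} {α : Fin d → ℝ} {k : Fin d → ℝ} {x : Fin d → ℝ}

theorem abs_exp_neg_sum_le_one (hk : ∀ j, 0 ≤ k j) :
    ∀ y ∈ posOrthant d, |exp (-∑ j, k j * y j)| ≤ 1 := fun y hy => by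
  rw [abs_exp, exp_le_one_iff, neg_nonpos]
  exact Finset.sum_nonneg fun j _ => mul_nonneg (hk j) (mem_posOrthant.1 hy j).le

theorem tendsto_laguerreLaplace (α k x : Fin d → ℝ) :
    Tendsto (fun r => laguerreLaplace α k r x) (𝓝 1) (𝓝 (exp (-∑ j, k j * x j))) := by
  have hcont : ContinuousAt (fun r => laguerreLaplace α k r x) 1 := by
    refine tendsto_finsetProd _ fun j _ => ?_
    have hden : ContinuousAt (fun r : ℝ => 1 + k j * (1 - r)) 1 := by fun_prop
    exact (hden.rpow_const (by simp)).mul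
      (((ContinuousAt.div (by fun_prop) hden (by simp)).mul continuousAt_const).neg.rexp)
  simpa [laguerreLaplace, laguerreLaplaceFactor, ← exp_sum] using hcont.tendsto

variable [hα : Fact (∀ j, -1 < α j)]
include hα

theorem laguerreHeatOp_exp (hk : ∀ j, 0 ≤ k j) {s : ℝ} (hs : 0 < s) (hx : x ∈ posOrthant d) :
    laguerreHeatOp α (fun y => exp (-∑ j, k j * y j)) (s, x) =
      laguerreLaplace α k (exp (-s)) x := by
  have habs : |x| = x := abs_of_nonneg fun j => (mem_posOrthant.1 hx j).le
  rw [laguerreHeatOp, integral_eq_lintegral_of_nonneg_ae (.of_forall fun _ => (exp_pos _).le)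
    (Measurable.aestronglyMeasurable (by fun_prop)), lintegral_exp_laguerreHeat hk,
    posTime_of_pos hs, habs, ENNReal.toReal_ofReal]
  exact Finset.prod_nonneg fun j _ => laguerreLaplaceFactor_nonneg (hk j) (by simpa using hs.le)

theorem tendsto_laguerrePoissonOp_exp (hk : ∀ j, 0 ≤ k j) (hx : x ∈ posOrthant d) :
    Tendsto (fun t => laguerrePoissonOp α t (fun y => exp (-∑ j, k j * y j)) x) (𝓝[>] 0)
      (𝓝 (exp (-∑ j, k j * x j))) := by
  have hmeas : Measurable fun y : Fin d → ℝ => exp (-∑ j, k j * y j) := by fun_prop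
  have hbdd := abs_exp_neg_sum_le_one hk
  simp_rw [laguerrePoissonOp_eq_integral_halfStable hmeas hbdd]
  refine tendsto_integral_halfStable
    ((measurable_laguerreHeatOp hmeas).comp measurable_prodMk_right)
    (fun s => abs_laguerreHeatOp_le hbdd (s, x)) ?_
  have hexp : Tendsto (fun s : ℝ => exp (-s)) (𝓝[>] 0) (𝓝 1) :=
    ((by fun_prop : Continuous fun s : ℝ => exp (-s)).tendsto' 0 1 (by simp)).mono_left
      nhdsWithin_le_nhds
  refine ((tendsto_laguerreLaplace α k x).comp hexp).congr' ?_
  filter_upwards [self_mem_nhdsWithin] with s hs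
  exact (laguerreHeatOp_exp hk hs hx).symm

variable {f g φ : (Fin d → ℝ) → ℝ} {M N : ℝ}

theorem integral_mul_laguerrePoissonOp_comm (hφ : Measurable φ)
    (hN : ∀ y ∈ posOrthant d, |φ y| ≤ N) (hf : Measurable f) (hM : ∀ y ∈ posOrthant d, |f y| ≤ M)
    (t : ℝ) :
    ∫ x, φ x * laguerrePoissonOp α t f x ∂laguerreMeasure α =
      ∫ x, f x * laguerrePoissonOp α t φ x ∂laguerreMeasure α := by
  refine integral_mul_integral_comm_of_isReversible (isReversible_laguerrePoisson α t) ?_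
  refine .of_bound (by fun_prop) (N * M) ((Measure.ae_compProd_iff ?_).2 ?_)
  · exact measurableSet_le (by fun_prop) measurable_const
  filter_upwards [ae_laguerreMeasure_mem_posOrthant α] with x hx
  filter_upwards [ae_laguerrePoisson_abs_le hM (t, x)] with y hy
  rw [norm_mul]
  exact mul_le_mul (hN x hx) hy (abs_nonneg _) ((abs_nonneg _).trans (hN x hx))

theorem tendsto_integral_laguerreMeasure (hφ : Measurable φ)
    (hN : ∀ y ∈ posOrthant d, |φ y| ≤ N) (hf : Measurable f) (hM : ∀ y ∈ posOrthant d, |f y| ≤ M)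
    (hlim : ∀ x ∈ posOrthant d, Tendsto (fun t => laguerrePoissonOp α t f x) (𝓝[>] 0) (𝓝 (g x))) :
    Tendsto (fun t => ∫ x, φ x * laguerrePoissonOp α t f x ∂laguerreMeasure α) (𝓝[>] 0)
      (𝓝 (∫ x, φ x * g x ∂laguerreMeasure α)) := by
  refine tendsto_integral_filter_of_dominated_convergence (fun _ => N * M)
    (.of_forall fun t => (hφ.mul (measurable_laguerrePoissonOp hf t)).aestronglyMeasurable)
    (.of_forall fun t => ?_) (integrable_const _) ?_
  all_goals filter_upwards [ae_laguerreMeasure_mem_posOrthant α] with x hx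
  · rw [norm_mul]
    exact mul_le_mul (hN x hx) (abs_laguerrePoissonOp_le hM t x) (abs_nonneg _)
      ((abs_nonneg _).trans (hN x hx))
  · exact (hlim x hx).const_mul _

/-- By symmetry of the semigroup and its continuity on exponentials, `f` and `g` have the same
Laplace transform with respect to the Laguerre measure. -/
theorem ae_eq_of_tendsto_laguerrePoissonOp (hf : Measurable f) (hM : ∀ y ∈ posOrthant d, |f y| ≤ M)
    (hg : Measurable g)
    (hlim : ∀ x ∈ posOrthant d, Tendsto (fun t => laguerrePoissonOp α t f x) (𝓝[>] 0) (𝓝 (g x))) :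
    f =ᵐ[volume.restrict (posOrthant d)] g := by
  have hgM : ∀ x ∈ posOrthant d, |g x| ≤ M := fun x hx =>
    le_of_tendsto (hlim x hx).abs (.of_forall fun t => abs_laguerrePoissonOp_le hM t x)
  have hint {h : (Fin d → ℝ) → ℝ} (hh : Measurable h) (hhM : ∀ x ∈ posOrthant d, |h x| ≤ M) :
      Integrable h (laguerreMeasure α) :=
    .of_bound hh.aestronglyMeasurable M ((ae_laguerreMeasure_mem_posOrthant α).mono hhM)
  refine (absolutelyContinuous_laguerreMeasure α).ae_le ((sub_ae_eq_zero f g).1 ?_)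
  refine ae_eq_zero_of_laplace_eq_zero (φ := id) continuous_id Function.injective_id
    ((ae_laguerreMeasure_mem_posOrthant α).mono fun x hx j => (mem_posOrthant.1 hx j).le)
    ((hint hf hM).sub (hint hg hgM)) fun k => ?_
  have hφ : Measurable fun x : Fin d → ℝ => exp (-∑ j, (k j : ℝ) * x j) := by fun_prop
  have hbdd := abs_exp_neg_sum_le_one (k := fun j => (k j : ℝ)) fun j => (k j).cast_nonneg
  have hintφ {h : (Fin d → ℝ) → ℝ} (hh : Integrable h (laguerreMeasure α)) :
      Integrable (fun x => exp (-∑ j, (k j : ℝ) * x j) * h x) (laguerreMeasure α) :=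
    hh.bdd_mul hφ.aestronglyMeasurable ((ae_laguerreMeasure_mem_posOrthant α).mono hbdd)
  have hlimf := tendsto_integral_laguerreMeasure (α := α) hf hM hφ hbdd fun x hx =>
    tendsto_laguerrePoissonOp_exp (fun j => (k j).cast_nonneg) hx
  simp_rw [← integral_mul_laguerrePoissonOp_comm hφ hbdd hf hM] at hlimf
  have heq := tendsto_nhds_unique hlimf (tendsto_integral_laguerreMeasure hφ hbdd hf hM hlim)
  simp_rw [id, Pi.sub_apply, mul_sub]
  rw [integral_sub (hintφ (hint hf hM)) (hintφ (hint hg hgM)), ← heq]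
  simp [mul_comm]

end BoundaryValue

section Calculus

variable {U : ℝ → ℝ} {A β : ℝ}

theorem abs_sub_le_of_abs_deriv_le_rpow (hβ : β ≠ 0) (hU : ∀ s > 0, DifferentiableAt ℝ U s)
    (hU' : ∀ s > 0, |deriv U s| ≤ A * s ^ (β - 1)) {a b : ℝ} (ha : 0 < a) (hab : a ≤ b) :
    |U b - U a| ≤ A / β * b ^ β - A / β * a ^ β := by
  have hB (s : ℝ) (hs : 0 < s) :
      HasDerivAt (fun s => A / β * s ^ β - A / β * a ^ β) (A * s ^ (β - 1)) s := by
    convert! ((hasDerivAt_rpow_const (p := β) (.inl hs.ne')).const_mul (A / β)).sub_const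
      (A / β * a ^ β) using 1
    field_simp
  have hpos {s : ℝ} (hs : a ≤ s) : 0 < s := ha.trans_le hs
  exact image_norm_le_of_norm_deriv_right_le_deriv_boundary' (f := fun s => U s - U a)
    (f' := deriv U) (a := a) (b := b)
    (fun s hs => ((hU s (hpos hs.1)).sub_const _).continuousAt.continuousWithinAt)
    (fun s hs => ((hU s (hpos hs.1)).hasDerivAt.sub_const _).hasDerivWithinAt) (by simp)
    (fun s hs => (hB s (hpos hs.1)).continuousAt.continuousWithinAt)
    (fun s hs => (hB s (hpos hs.1)).hasDerivWithinAt) (fun s hs => hU' s (hpos hs.1))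
    (right_mem_Icc.2 hab)

theorem exists_tendsto_of_abs_deriv_le_rpow (hβ : 0 < β) (hU : ∀ s > 0, DifferentiableAt ℝ U s)
    (hU' : ∀ s > 0, |deriv U s| ≤ A * s ^ (β - 1)) :
    ∃ l, Tendsto U (𝓝[>] 0) (𝓝 l) ∧ ∀ b > 0, |U b - l| ≤ A / β * b ^ β := by
  have hsub {a b : ℝ} (ha : 0 < a) (hab : a ≤ b) :=
    abs_sub_le_of_abs_deriv_le_rpow hβ.ne' hU hU' ha hab
  have hpow : Tendsto (fun s : ℝ => A / β * s ^ β) (𝓝[>] 0) (𝓝 0) := by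
    have h := (continuousAt_rpow_const 0 β (.inr hβ.le)).const_mul (A / β)
    simpa [ContinuousAt, zero_rpow hβ.ne'] using h.tendsto.mono_left nhdsWithin_le_nhds
  have hcauchy : Cauchy (map U (𝓝[>] 0)) := by
    refine cauchy_map_iff'.2 (tendsto_uniformity_iff_dist_tendsto_zero.2 ?_)
    refine squeeze_zero' (.of_forall fun _ => dist_nonneg) ?_
      (tendsto_uniformity_iff_dist_tendsto_zero.1 (cauchy_map_iff'.1 hpow.cauchy_map))
    filter_upwards [prod_mem_prod self_mem_nhdsWithin self_mem_nhdsWithin] with p hp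
    simp only [dist_eq]
    rcases le_total p.1 p.2 with h | h
    · rw [abs_sub_comm, abs_sub_comm (A / β * _)]
      exact (hsub hp.1 h).trans (le_abs_self _)
    · exact (hsub hp.2 h).trans (le_abs_self _)
  obtain ⟨l, hl⟩ := cauchy_map_iff_exists_tendsto.1 hcauchy
  refine ⟨l, hl, fun b hb => ?_⟩
  have hlim := hpow.const_sub (A / β * b ^ β)
  rw [sub_zero] at hlim
  refine le_of_tendsto_of_tendsto (hl.const_sub (U b)).abs hlim ?_
  filter_upwards [Ioo_mem_nhdsGT hb] with a ha using hsub ha.1 ha.2.le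

theorem abs_sub_le_of_abs_deriv_le {C a b : ℝ} (hU : ∀ s ≥ a, DifferentiableAt ℝ U s)
    (hU' : ∀ s ≥ a, |deriv U s| ≤ C) (hab : a ≤ b) : |U b - U a| ≤ C * (b - a) := by
  simpa [abs_of_nonneg (sub_nonneg.2 hab)] using
    (convex_Ici a).norm_image_sub_le_of_norm_deriv_le hU hU' self_mem_Ici hab

theorem abs_deriv_le_of_abs_sub_le {C t : ℝ} (hU : ∀ h > 0, |U (t + h) - U t| ≤ C * h) :
    |deriv U t| ≤ C := by
  have hC : 0 ≤ C := by simpa using (abs_nonneg _).trans (hU 1 one_pos)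
  by_cases hd : DifferentiableAt ℝ U t
  · refine le_of_tendsto hd.hasDerivAt.tendsto_slope_zero_right.abs ?_
    filter_upwards [self_mem_nhdsWithin] with h (hh : 0 < h)
    rw [smul_eq_mul, abs_mul, abs_inv, abs_of_pos hh, inv_mul_le_iff₀ hh, mul_comm]
    exact hU h hh
  · rwa [deriv_zero_of_not_differentiableAt hd, abs_zero]

theorem le_mul_min_one {a p C : ℝ} (hC : 0 ≤ C) (hp : a ≤ C * p) (h1 : a ≤ C) :
    a ≤ C * min p 1 := by
  rw [mul_min_of_nonneg _ _ hC, mul_one]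
  exact le_min hp h1

end Calculus

section BesselIntegral

variable {lam γ t : ℝ}

/-- The function `u ^ (-lam - 1) * min ((u / t) ^ γ) 1`, the model majorant for the integrals
defining fractional derivatives of order `lam`; it is integrable on `(0, ∞)` if `0 < lam < γ`. -/
noncomputable def fracMajorant (lam γ t u : ℝ) : ℝ :=
  u ^ (-lam - 1) * min ((u / t) ^ γ) 1

theorem fracMajorant_of_le (hγ : 0 ≤ γ) {u : ℝ} (hu : 0 < u) (hut : u ≤ t) :
    fracMajorant lam γ t u = u ^ (γ - lam - 1) * t ^ (-γ) := by
  have ht : 0 < t := hu.trans_le hut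
  rw [fracMajorant, min_eq_left (rpow_le_one (by positivity) ((div_le_one ht).2 hut) hγ),
    div_rpow hu.le ht.le, show γ - lam - 1 = -lam - 1 + γ by ring, rpow_add hu, rpow_neg ht.le]
  ring

theorem fracMajorant_of_ge (hγ : 0 ≤ γ) (ht : 0 < t) {u : ℝ} (hut : t ≤ u) :
    fracMajorant lam γ t u = u ^ (-lam - 1) := by
  rw [fracMajorant, min_eq_right (one_le_rpow ((one_le_div ht).2 hut) hγ), mul_one]

theorem integrableOn_Ioc_fracMajorant (hγ : 0 ≤ γ) (hlamγ : lam < γ) (ht : 0 < t) :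
    IntegrableOn (fracMajorant lam γ t) (Ioc 0 t) := by
  have h := intervalIntegral.intervalIntegrable_rpow' (a := 0) (b := t) (r := γ - lam - 1)
    (by linarith)
  rw [intervalIntegrable_iff_integrableOn_Ioc_of_le ht.le] at h
  exact IntegrableOn.congr_fun (h.mul_const (t ^ (-γ)))
    (fun u hu => (fracMajorant_of_le hγ hu.1 hu.2).symm) measurableSet_Ioc

theorem integrableOn_Ioi_fracMajorant (hγ : 0 ≤ γ) (hlam : 0 < lam) (ht : 0 < t) :
    IntegrableOn (fracMajorant lam γ t) (Ioi t) :=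
  (integrableOn_Ioi_rpow_of_lt (by linarith) ht).congr_fun
    (fun _ hu => (fracMajorant_of_ge hγ ht (le_of_lt hu)).symm) measurableSet_Ioi

theorem integrableOn_fracMajorant (hlam : 0 < lam) (hlamγ : lam < γ) (ht : 0 < t) :
    IntegrableOn (fracMajorant lam γ t) (Ioi 0) := by
  have hγ : 0 ≤ γ := (hlam.trans hlamγ).le
  rw [← Ioc_union_Ioi_eq_Ioi ht.le]
  exact (integrableOn_Ioc_fracMajorant hγ hlamγ ht).union
    (integrableOn_Ioi_fracMajorant hγ hlam ht)

theorem integral_fracMajorant (hlam : 0 < lam) (hlamγ : lam < γ) (ht : 0 < t) :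
    ∫ u in Ioi 0, fracMajorant lam γ t u = t ^ (-lam) * (1 / (γ - lam) + 1 / lam) := by
  have hγ : 0 ≤ γ := (hlam.trans hlamγ).le
  rw [← Ioc_union_Ioi_eq_Ioi ht.le, setIntegral_union Ioc_disjoint_Ioi_same measurableSet_Ioi
      (integrableOn_Ioc_fracMajorant hγ hlamγ ht) (integrableOn_Ioi_fracMajorant hγ hlam ht),
    setIntegral_congr_fun measurableSet_Ioc fun u hu => fracMajorant_of_le hγ hu.1 hu.2,
    setIntegral_congr_fun measurableSet_Ioi fun u hu => fracMajorant_of_ge hγ ht (le_of_lt hu),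
    integral_Ioi_rpow_of_lt (by linarith) ht, integral_mul_const,
    ← intervalIntegral.integral_of_le ht.le, integral_rpow (.inl (by linarith)),
    zero_rpow (by linarith), sub_add_cancel, sub_add_cancel, sub_zero, neg_div_neg_eq,
    div_mul_eq_mul_div, ← rpow_add ht, sub_add_eq_add_sub, add_neg_cancel, zero_sub]
  ring

/-- The integrand of the Bessel fractional derivative of order `lam`, for a trajectory `U` which is
expected to start at the value `v`. -/
noncomputable def besselIntegrand (lam : ℝ) (U : ℝ → ℝ) (v u : ℝ) : ℝ :=
  u ^ (-lam - 1) * (exp (-u) * U u - v)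

variable {U : ℝ → ℝ} {v B C : ℝ}

theorem besselIntegrand_sub (lam : ℝ) (U W : ℝ → ℝ) (v w u : ℝ) :
    besselIntegrand lam (fun u => U u - W u) (v - w) u =
      besselIntegrand lam U v u - besselIntegrand lam W w u := by
  simp only [besselIntegrand]
  ring

theorem one_sub_exp_neg_le_min (u : ℝ) : 1 - exp (-u) ≤ min u 1 :=
  le_min (by linarith [add_one_le_exp (-u)]) (by linarith [exp_pos (-u)])

theorem abs_besselIntegrand_le {u : ℝ} (hu : 0 < u) (hv : |v| ≤ B)
    (hU : |U u - v| ≤ C * min ((u / t) ^ γ) 1) :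
    |besselIntegrand lam U v u| ≤ C * fracMajorant lam γ t u + B * fracMajorant lam 1 1 u := by
  have hpow : 0 < u ^ (-lam - 1) := rpow_pos_of_pos hu _
  have hexp : exp (-u) ≤ 1 := by simpa using hu.le
  have hdecomp : exp (-u) * U u - v = exp (-u) * (U u - v) - (1 - exp (-u)) * v := by ring
  have hbound : |exp (-u) * U u - v| ≤ C * min ((u / t) ^ γ) 1 + B * min u 1 := by
    rw [hdecomp]
    refine (abs_sub _ _).trans (add_le_add ?_ ?_)
    · rw [abs_mul, abs_exp]
      exact (mul_le_of_le_one_left (abs_nonneg _) hexp).trans hU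
    · rw [abs_mul, abs_of_nonneg (sub_nonneg.2 hexp), mul_comm]
      exact mul_le_mul hv (one_sub_exp_neg_le_min u) (sub_nonneg.2 hexp) ((abs_nonneg _).trans hv)
  rw [besselIntegrand, abs_mul, abs_of_pos hpow]
  refine (mul_le_mul_of_nonneg_left hbound hpow.le).trans_eq ?_
  rw [fracMajorant, fracMajorant, div_one, rpow_one]
  ring

theorem integrableOn_besselMajorant (hlam : 0 < lam) (hlam1 : lam < 1) (hlamγ : lam < γ)
    (ht : 0 < t) (B C : ℝ) :
    IntegrableOn (fun u => C * fracMajorant lam γ t u + B * fracMajorant lam 1 1 u) (Ioi 0) :=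
  ((integrableOn_fracMajorant hlam hlamγ ht).const_mul C).add
    ((integrableOn_fracMajorant hlam hlam1 one_pos).const_mul B)

theorem integrableOn_besselIntegrand (hlam : 0 < lam) (hlam1 : lam < 1) (hlamγ : lam < γ)
    (ht : 0 < t) (hUm : Measurable U) (hv : |v| ≤ B)
    (hU : ∀ u > 0, |U u - v| ≤ C * min ((u / t) ^ γ) 1) :
    IntegrableOn (besselIntegrand lam U v) (Ioi 0) := by
  refine (integrableOn_besselMajorant hlam hlam1 hlamγ ht B C).mono' ?_ ?_
  · exact Measurable.aestronglyMeasurable (by unfold besselIntegrand; fun_prop)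
  · filter_upwards [ae_restrict_mem measurableSet_Ioi] with u hu
    exact abs_besselIntegrand_le hu hv (hU u hu)

theorem abs_integral_besselIntegrand_le (hlam : 0 < lam) (hlam1 : lam < 1) (hlamγ : lam < γ)
    (ht : 0 < t) (hv : |v| ≤ B) (hU : ∀ u > 0, |U u - v| ≤ C * min ((u / t) ^ γ) 1) :
    |∫ u in Ioi 0, besselIntegrand lam U v u| ≤
      C * (t ^ (-lam) * (1 / (γ - lam) + 1 / lam)) + B * (1 / (1 - lam) + 1 / lam) := by
  calc |∫ u in Ioi 0, besselIntegrand lam U v u|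
      ≤ ∫ u in Ioi 0, C * fracMajorant lam γ t u + B * fracMajorant lam 1 1 u := by
        refine norm_integral_le_of_norm_le (f := besselIntegrand lam U v)
          (integrableOn_besselMajorant hlam hlam1 hlamγ ht B C) ?_
        filter_upwards [ae_restrict_mem measurableSet_Ioi] with u hu
        exact abs_besselIntegrand_le hu hv (hU u hu)
    _ = _ := by
        rw [integral_add ((integrableOn_fracMajorant hlam hlamγ ht).const_mul C)
          ((integrableOn_fracMajorant hlam hlam1 one_pos).const_mul B), integral_const_mul,
          integral_const_mul, integral_fracMajorant hlam hlamγ ht,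
          integral_fracMajorant hlam hlam1 one_pos, one_rpow, one_mul]

theorem not_integrableOn_besselIntegrand (hlam : 0 ≤ lam) {l : ℝ}
    (hU : Tendsto U (𝓝[>] 0) (𝓝 l)) (hv : v ≠ l) :
    ¬ IntegrableOn (besselIntegrand lam U v) (Ioi 0) := by
  intro hint
  have hc : 0 < |l - v| := abs_pos.2 (sub_ne_zero.2 hv.symm)
  have hexp : Tendsto (fun u : ℝ => exp (-u)) (𝓝[>] 0) (𝓝 1) :=
    ((by fun_prop : Continuous fun u : ℝ => exp (-u)).tendsto' 0 1 (by simp)).mono_left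
      nhdsWithin_le_nhds
  have hlim : Tendsto (fun u => |exp (-u) * U u - v|) (𝓝[>] 0) (𝓝 |l - v|) := by
    simpa using ((hexp.mul hU).sub_const v).abs
  obtain ⟨δ, hδ, hsub⟩ :=
    mem_nhdsGT_iff_exists_Ioo_subset.1 (hlim.eventually (lt_mem_nhds (half_lt_self hc)))
  have hpow : IntegrableOn (fun u : ℝ => u ^ (-lam - 1)) (Ioo 0 δ) := by
    refine Integrable.mono' ((hint.mono_set Ioo_subset_Ioi_self).norm.const_mul (2 / |l - v|))
      (by fun_prop) ?_
    filter_upwards [ae_restrict_mem measurableSet_Ioo] with u hu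
    have hp : 0 < u ^ (-lam - 1) := rpow_pos_of_pos hu.1 _
    have hlow : |l - v| / 2 < |exp (-u) * U u - v| := hsub hu
    rw [besselIntegrand, norm_mul, norm_of_nonneg hp.le, norm_eq_abs, div_mul_eq_mul_div,
      le_div_iff₀ hc]
    nlinarith
  linarith [(intervalIntegral.integrableOn_Ioo_rpow_iff hδ).1 hpow]

end BesselIntegral

theorem half_rpow_le_two_mul_rpow {t e : ℝ} (ht : 0 < t) (he : -1 ≤ e) :
    (t / 2) ^ e ≤ 2 * t ^ e := by
  have hpow : (2 : ℝ)⁻¹ ≤ 2 ^ e := by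
    rw [← rpow_neg_one]
    exact rpow_le_rpow_of_exponent_le one_le_two he
  rw [div_rpow ht.le two_pos.le, div_le_iff₀ (by positivity)]
  have : 0 < t ^ e := by positivity
  nlinarith

section Lipschitz

variable {d : ℕ} {α : Fin d → ℝ} {f : (Fin d → ℝ) → ℝ} {x : Fin d → ℝ} {lam β A M t : ℝ}

/-- The defining inequality of the Laguerre Lipschitz space of order `β < 1`, with constant `A`:
the time derivative of `P_t f` is at most `A * t ^ (β - 1)` on the positive orthant. -/
def IsLaguerreLipschitz (α : Fin d → ℝ) (β A : ℝ) (f : (Fin d → ℝ) → ℝ) : Prop :=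
  ∀ t > 0, ∀ x ∈ posOrthant d, |deriv (fun u => laguerrePoissonOp α u f x) t| ≤ A * t ^ (β - 1)

theorem one_mem_posOrthant : (1 : Fin d → ℝ) ∈ posOrthant d :=
  mem_posOrthant.2 fun _ => one_pos

theorem IsLaguerreLipschitz.nonneg (hL : IsLaguerreLipschitz α β A f) : 0 ≤ A := by
  simpa using (abs_nonneg _).trans (hL 1 one_pos 1 one_mem_posOrthant)

theorem nonneg_of_abs_le_on_posOrthant (hM : ∀ y ∈ posOrthant d, |f y| ≤ M) : 0 ≤ M :=
  (abs_nonneg _).trans (hM 1 one_mem_posOrthant)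

variable [hα : Fact (∀ j, -1 < α j)]

theorem abs_laguerrePoissonOp_sub_le (hf : Measurable f) (hM : ∀ y ∈ posOrthant d, |f y| ≤ M)
    (ht : 0 < t) {h : ℝ} (hh : 0 ≤ h) (x : Fin d → ℝ) :
    |laguerrePoissonOp α (t + h) f x - laguerrePoissonOp α t f x| ≤ 6 * M / t * h := by
  have hM0 := nonneg_of_abs_le_on_posOrthant hM
  have := abs_sub_le_of_abs_deriv_le (U := fun s => laguerrePoissonOp α s f x) (C := 6 * M / t)
    (fun s hs => differentiableAt_laguerrePoissonOp hf hM (ht.trans_le hs) x)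
    (fun s hs => (abs_deriv_laguerrePoissonOp_le hf hM (ht.trans_le hs) x).trans (by gcongr))
    (le_add_of_nonneg_right hh)
  rwa [add_sub_cancel_left] at this

theorem abs_laguerrePoissonOp_sub_le_mul_min (hf : Measurable f)
    (hM : ∀ y ∈ posOrthant d, |f y| ≤ M) (ht : 0 < t) {u : ℝ} (hu : 0 ≤ u) (x : Fin d → ℝ) :
    |laguerrePoissonOp α (t + u) f x - laguerrePoissonOp α t f x| ≤ 6 * M * min (u / t) 1 := by
  have hM0 := nonneg_of_abs_le_on_posOrthant hM
  refine le_mul_min_one (by positivity) ?_ ?_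
  · rw [mul_div_assoc', ← div_mul_eq_mul_div]
    exact abs_laguerrePoissonOp_sub_le hf hM ht hu x
  · refine (abs_sub _ _).trans ?_
    linarith [abs_laguerrePoissonOp_le (α := α) hM (t + u) x,
      abs_laguerrePoissonOp_le (α := α) hM t x]

theorem IsLaguerreLipschitz.abs_sub_le (hL : IsLaguerreLipschitz α β A f) (hβ : β ≤ 1)
    (hf : Measurable f) (hM : ∀ y ∈ posOrthant d, |f y| ≤ M) (ht : 0 < t) {h : ℝ} (hh : 0 ≤ h)
    (hx : x ∈ posOrthant d) :
    |laguerrePoissonOp α (t + h) f x - laguerrePoissonOp α t f x| ≤ A * t ^ (β - 1) * h := by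
  have := abs_sub_le_of_abs_deriv_le (U := fun s => laguerrePoissonOp α s f x)
    (C := A * t ^ (β - 1))
    (fun s hs => differentiableAt_laguerrePoissonOp hf hM (ht.trans_le hs) x)
    (fun s hs => (hL s (ht.trans_le hs) x hx).trans
      (mul_le_mul_of_nonneg_left (rpow_le_rpow_of_nonpos ht hs (by linarith)) hL.nonneg))
    (le_add_of_nonneg_right hh)
  rwa [add_sub_cancel_left] at this

theorem IsLaguerreLipschitz.abs_sub_le_of_order_lt (hL : IsLaguerreLipschitz α β A f)
    (hlam : 0 ≤ lam) (hlamβ : lam ≤ β) (hβ : β ≤ 1) (hf : Measurable f)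
    (hM : ∀ y ∈ posOrthant d, |f y| ≤ M) (ht : 0 < t) {h : ℝ} (hh : 0 ≤ h)
    (hx : x ∈ posOrthant d) :
    |laguerrePoissonOp α (t + h) f x - laguerrePoissonOp α t f x| ≤
      (A + 6 * M) * t ^ (β - lam - 1) * h := by
  have hM0 := nonneg_of_abs_le_on_posOrthant hM
  have hA := hL.nonneg
  rcases le_total t 1 with ht1 | ht1
  · have hpow : t ^ (β - 1) ≤ t ^ (β - lam - 1) :=
      rpow_le_rpow_of_exponent_ge ht ht1 (by linarith)
    refine (hL.abs_sub_le hβ hf hM ht hh hx).trans ?_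
    gcongr
    linarith
  · have hpow : t⁻¹ ≤ t ^ (β - lam - 1) := by
      rw [← rpow_neg_one]
      exact rpow_le_rpow_of_exponent_le ht1 (by linarith)
    refine (abs_laguerrePoissonOp_sub_le hf hM ht hh x).trans ?_
    rw [div_eq_mul_inv]
    gcongr
    linarith

/-- Halving the time and using the semigroup law turns the second difference of `P_t f` into a
first difference of `P_{t/2}` applied to a function controlled by the Lipschitz bound. -/
theorem IsLaguerreLipschitz.abs_second_difference_le (hL : IsLaguerreLipschitz α β A f)
    (hβ0 : 0 ≤ β) (hβ : β ≤ 1) (hf : Measurable f) (hM : ∀ y ∈ posOrthant d, |f y| ≤ M)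
    (ht : 0 < t) {h u : ℝ} (hh : 0 ≤ h) (hu : 0 ≤ u) (x : Fin d → ℝ) :
    |(laguerrePoissonOp α (t + u + h) f x - laguerrePoissonOp α (t + u) f x) -
        (laguerrePoissonOp α (t + h) f x - laguerrePoissonOp α t f x)| ≤
      12 * A * t ^ (β - 1) * h * min (u / (t / 2)) 1 := by
  have hA := hL.nonneg
  have ht2 : 0 < t / 2 := half_pos ht
  set Δ : (Fin d → ℝ) → ℝ := fun y =>
    laguerrePoissonOp α (t / 2 + h) f y - laguerrePoissonOp α (t / 2) f y
  have hΔm : Measurable Δ :=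
    (measurable_laguerrePoissonOp hf _).sub (measurable_laguerrePoissonOp hf _)
  have hΔD : ∀ y ∈ posOrthant d, |Δ y| ≤ 2 * (A * t ^ (β - 1) * h) := fun y hy =>
    calc |Δ y| ≤ A * (t / 2) ^ (β - 1) * h := hL.abs_sub_le hβ hf hM ht2 hh hy
      _ ≤ A * (2 * t ^ (β - 1)) * h := by gcongr; exact half_rpow_le_two_mul_rpow ht (by linarith)
      _ = _ := by ring
  have hΔP {a : ℝ} (ha : 0 < a) : laguerrePoissonOp α a Δ x =
      laguerrePoissonOp α (a + (t / 2 + h)) f x - laguerrePoissonOp α (a + t / 2) f x := by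
    have hint (s : ℝ) := integrable_laguerrePoisson (α := α) (measurable_laguerrePoissonOp hf s)
      (fun y _ => abs_laguerrePoissonOp_le (α := α) hM s y) (a, x)
    rw [← laguerrePoissonOp_laguerrePoissonOp hf hM ha (by positivity),
      ← laguerrePoissonOp_laguerrePoissonOp hf hM ha ht2]
    exact integral_sub (hint _) (hint _)
  have hdiff := abs_laguerrePoissonOp_sub_le_mul_min (α := α) hΔm hΔD ht2 hu x
  rw [hΔP (by positivity), hΔP ht2] at hdiff
  convert! hdiff using 1
  · ring_nf
  · ring

theorem IsLaguerreLipschitz.exists_boundaryValue (hL : IsLaguerreLipschitz α β A f) (hβ : 0 < β)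
    (hf : Measurable f) (hM : ∀ y ∈ posOrthant d, |f y| ≤ M) :
    ∃ g : (Fin d → ℝ) → ℝ, Measurable g ∧ ∀ x ∈ posOrthant d,
      Tendsto (fun t => laguerrePoissonOp α t f x) (𝓝[>] 0) (𝓝 (g x)) ∧
      ∀ b > 0, |laguerrePoissonOp α b f x - g x| ≤ A / β * b ^ β := by
  have hex (x) (hx : x ∈ posOrthant d) := exists_tendsto_of_abs_deriv_le_rpow
    (U := fun t => laguerrePoissonOp α t f x) hβ
    (fun s hs => differentiableAt_laguerrePoissonOp hf hM hs x) fun s hs => hL s hs x hx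
  choose! g hg using hex
  refine ⟨(posOrthant d).indicator g, ?_, fun x hx => by simpa [hx] using hg x hx⟩
  refine measurable_of_tendsto_metrizable' (𝓝[>] (0 : ℝ))
    (f := fun t => (posOrthant d).indicator (laguerrePoissonOp α t f))
    (fun t => (measurable_laguerrePoissonOp hf t).indicator (measurableSet_posOrthant d))
    (tendsto_pi_nhds.2 fun x => ?_)
  by_cases hx : x ∈ posOrthant d
  · simpa [hx] using (hg x hx).1
  · simp [hx]

theorem abs_laguerrePoissonOp_sub_boundaryValue_le (hA : 0 ≤ A) (hβ : 0 < β)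
    (hM : ∀ y ∈ posOrthant d, |f y| ≤ M) {v : ℝ} (hv : |v| ≤ M)
    (hrate : ∀ b > 0, |laguerrePoissonOp α b f x - v| ≤ A / β * b ^ β) {u : ℝ} (hu : 0 < u) :
    |laguerrePoissonOp α u f x - v| ≤ (A / β + 2 * M) * min ((u / 1) ^ β) 1 := by
  have hM0 := nonneg_of_abs_le_on_posOrthant hM
  have hA0 : 0 ≤ A / β := by positivity
  rw [div_one]
  refine le_mul_min_one (by positivity) ?_ ?_
  · exact (hrate u hu).trans (by gcongr; linarith)
  · refine (abs_sub _ _).trans ?_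
    linarith [abs_laguerrePoissonOp_le (α := α) hM u x]

/-- Where `f` differs from its boundary value the integral diverges and so has the value `0`. -/
theorem IsLaguerreLipschitz.abs_besselIntegral_le (hL : IsLaguerreLipschitz α β A f)
    (hlam : 0 < lam) (hlamβ : lam < β) (hlam1 : lam < 1) (hf : Measurable f)
    (hM : ∀ y ∈ posOrthant d, |f y| ≤ M) (hx : x ∈ posOrthant d) :
    |∫ u in Ioi 0, besselIntegrand lam (fun u => laguerrePoissonOp α u f x) (f x) u| ≤
      (A / β + 2 * M) * (1 / (β - lam) + 1 / lam) + M * (1 / (1 - lam) + 1 / lam) := by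
  have hβ : 0 < β := hlam.trans hlamβ
  obtain ⟨g, -, hg⟩ := hL.exists_boundaryValue hβ hf hM
  obtain ⟨hlim, hrate⟩ := hg x hx
  by_cases hfg : f x = g x
  · rw [← hfg] at hrate
    simpa using abs_integral_besselIntegrand_le hlam hlam1 hlamβ one_pos (hM x hx)
      fun u hu => abs_laguerrePoissonOp_sub_boundaryValue_le hL.nonneg hβ hM (hM x hx) hrate hu
  · rw [integral_undef (not_integrableOn_besselIntegrand hlam.le hlim hfg), abs_zero]
    have hA := hL.nonneg
    have hM0 := nonneg_of_abs_le_on_posOrthant hM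
    have : 0 < 1 - lam := sub_pos.2 hlam1
    have : 0 < β - lam := sub_pos.2 hlamβ
    positivity

theorem integrableOn_besselIntegrand_laguerrePoissonOp_add (hlam : 0 < lam) (hlam1 : lam < 1)
    (hf : Measurable f) (hM : ∀ y ∈ posOrthant d, |f y| ≤ M) (ht : 0 < t) (x : Fin d → ℝ) :
    IntegrableOn (besselIntegrand lam (fun u => laguerrePoissonOp α (t + u) f x)
      (laguerrePoissonOp α t f x)) (Ioi 0) := by
  refine integrableOn_besselIntegrand hlam hlam1 hlam1 ht (C := 6 * M) ?_
    (abs_laguerrePoissonOp_le hM t x) fun u hu => ?_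
  · exact measurable_laguerrePoissonOp_comp hf (measurable_const_add t) measurable_const
  · rw [rpow_one]
    exact abs_laguerrePoissonOp_sub_le_mul_min hf hM ht hu.le x

theorem IsLaguerreLipschitz.integrable_besselIntegrand_prod (hL : IsLaguerreLipschitz α β A f)
    (hlam : 0 < lam) (hlamβ : lam < β) (hlam1 : lam < 1) (hf : Measurable f)
    (hM : ∀ y ∈ posOrthant d, |f y| ≤ M) (t : ℝ) (x : Fin d → ℝ) :
    Integrable
      (Function.uncurry fun y => besselIntegrand lam (fun u => laguerrePoissonOp α u f y) (f y))
      ((laguerrePoisson α (t, x)).prod (volume.restrict (Ioi 0))) := by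
  have hβ : 0 < β := hlam.trans hlamβ
  obtain ⟨g, hgm, hg⟩ := hL.exists_boundaryValue hβ hf hM
  have hfg : ∀ᵐ y ∂laguerrePoisson α (t, x), y ∈ posOrthant d ∧ f y = g y :=
    (laguerrePoisson_absolutelyContinuous α (t, x)).ae_le
      ((ae_restrict_mem (measurableSet_posOrthant d)).and
        (ae_eq_of_tendsto_laguerrePoissonOp hf hM hgm fun x hx => (hg x hx).1))
  have hmaj := integrableOn_besselMajorant hlam hlam1 hlamβ one_pos M (A / β + 2 * M)
  refine (hmaj.comp_snd (laguerrePoisson α (t, x))).mono' ?_ ?_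
  · have hP : Measurable fun q : (Fin d → ℝ) × ℝ => laguerrePoissonOp α q.2 f q.1 :=
      measurable_laguerrePoissonOp_comp hf measurable_snd measurable_fst
    unfold besselIntegrand Function.uncurry
    exact Measurable.aestronglyMeasurable (by fun_prop)
  · filter_upwards [Measure.quasiMeasurePreserving_fst.ae hfg,
      Measure.quasiMeasurePreserving_snd.ae (ae_restrict_mem measurableSet_Ioi)]
      with q ⟨hq, hfgq⟩ hu
    have hrate := (hg _ hq).2
    rw [← hfgq] at hrate
    exact abs_besselIntegrand_le (U := fun u => laguerrePoissonOp α u f q.1) hu (hM _ hq)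
      (abs_laguerrePoissonOp_sub_boundaryValue_le hL.nonneg hβ hM (hM _ hq) hrate hu)

theorem integral_besselIntegrand_laguerrePoisson (hf : Measurable f)
    (hM : ∀ y ∈ posOrthant d, |f y| ≤ M) (ht : 0 < t) (x : Fin d → ℝ) {u : ℝ} (hu : 0 < u) :
    ∫ y, besselIntegrand lam (fun u => laguerrePoissonOp α u f y) (f y) u
        ∂laguerrePoisson α (t, x) =
      besselIntegrand lam (fun u => laguerrePoissonOp α (t + u) f x)
        (laguerrePoissonOp α t f x) u := by
  have hint := integrable_laguerrePoisson (α := α) (measurable_laguerrePoissonOp hf u)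
    (fun y _ => abs_laguerrePoissonOp_le (α := α) hM u y) (t, x)
  simp only [besselIntegrand]
  rw [integral_const_mul, integral_sub (hint.const_mul _) (integrable_laguerrePoisson hf hM _),
    integral_const_mul, ← laguerrePoissonOp_laguerrePoissonOp hf hM ht hu]
  rfl

theorem IsLaguerreLipschitz.laguerrePoissonOp_besselIntegral
    (hL : IsLaguerreLipschitz α β A f) (hlam : 0 < lam) (hlamβ : lam < β) (hlam1 : lam < 1)
    (hf : Measurable f) (hM : ∀ y ∈ posOrthant d, |f y| ≤ M) (ht : 0 < t) (x : Fin d → ℝ) :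
    laguerrePoissonOp α t (fun y => ∫ u in Ioi 0,
        besselIntegrand lam (fun u => laguerrePoissonOp α u f y) (f y) u) x =
      ∫ u in Ioi 0, besselIntegrand lam (fun u => laguerrePoissonOp α (t + u) f x)
        (laguerrePoissonOp α t f x) u := by
  rw [laguerrePoissonOp,
    integral_integral_swap (hL.integrable_besselIntegrand_prod hlam hlamβ hlam1 hf hM t x)]
  exact setIntegral_congr_fun measurableSet_Ioi fun u hu =>
    integral_besselIntegrand_laguerrePoisson hf hM ht x hu

theorem IsLaguerreLipschitz.abs_besselIntegral_sub_le
    (hL : IsLaguerreLipschitz α β A f) (hlam : 0 < lam) (hlamβ : lam ≤ β) (hlam1 : lam < 1)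
    (hβ : β ≤ 1) (hf : Measurable f) (hM : ∀ y ∈ posOrthant d, |f y| ≤ M) (ht : 0 < t)
    {h : ℝ} (hh : 0 ≤ h) (hx : x ∈ posOrthant d) :
    |(∫ u in Ioi 0, besselIntegrand lam (fun u => laguerrePoissonOp α (t + h + u) f x)
        (laguerrePoissonOp α (t + h) f x) u) -
      ∫ u in Ioi 0, besselIntegrand lam (fun u => laguerrePoissonOp α (t + u) f x)
        (laguerrePoissonOp α t f x) u| ≤
      25 * (1 / (1 - lam) + 1 / lam) * (M + A) * t ^ (β - lam - 1) * h := by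
  have hth : 0 < t + h := by positivity
  have hint {s : ℝ} (hs : 0 < s) :=
    integrableOn_besselIntegrand_laguerrePoissonOp_add (α := α) hlam hlam1 hf hM hs x
  have hfirst := hL.abs_sub_le_of_order_lt hlam.le hlamβ hβ hf hM ht hh hx
  have hsecond (u : ℝ) (hu : 0 < u) := by
    have := hL.abs_second_difference_le (hlam.le.trans hlamβ) hβ hf hM ht hh hu.le x
    rwa [add_right_comm t u h, ← rpow_one (u / (t / 2))] at this
  rw [← integral_sub (hint hth) (hint ht)]
  simp_rw [← besselIntegrand_sub]
  refine (abs_integral_besselIntegrand_le hlam hlam1 hlam1 (half_pos ht) hfirst hsecond).trans ?_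
  have hM0 := nonneg_of_abs_le_on_posOrthant hM
  have hA := hL.nonneg
  have : 0 < 1 - lam := sub_pos.2 hlam1
  have hpow : t ^ (β - 1) * t ^ (-lam) = t ^ (β - lam - 1) := by
    rw [← rpow_add ht]
    ring_nf
  calc _ ≤ 12 * A * t ^ (β - 1) * h * (2 * t ^ (-lam) * (1 / (1 - lam) + 1 / lam)) +
        (A + 6 * M) * t ^ (β - lam - 1) * h * (1 / (1 - lam) + 1 / lam) := by
        gcongr
        exact half_rpow_le_two_mul_rpow ht (by linarith)
    _ = (1 / (1 - lam) + 1 / lam) * (25 * A + 6 * M) * t ^ (β - lam - 1) * h := by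
        rw [← hpow]
        ring
    _ ≤ (1 / (1 - lam) + 1 / lam) * (25 * (M + A)) * t ^ (β - lam - 1) * h := by
        gcongr
        linarith
    _ = _ := by ring

end Lipschitz

section FractionalDerivative

variable {d : ℕ} {α : Fin d → ℝ} {f : (Fin d → ℝ) → ℝ} {x : Fin d → ℝ} {lam β A M t : ℝ}

/-- The normalising factor `1 / c_λ` of the Bessel fractional derivative of order `lam`. -/
noncomputable def besselFactor (lam : ℝ) : ℝ :=
  1 / ∫ u in Ioi (0 : ℝ), u ^ (-lam - 1) * (exp (-u) - 1)

variable [hα : Fact (∀ j, -1 < α j)]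

theorem eventuallyEq_plP (f : (Fin d → ℝ) → ℝ) (hx : x ∈ posOrthant d) (ht : 0 < t) :
    (fun s => plP d α s f x) =ᶠ[𝓝 t] fun s => laguerrePoissonOp α s f x :=
  (lt_mem_nhds ht).mono fun _ hs => plP_eq_laguerrePoissonOp hs f hx

theorem isLaguerreLipschitz_iff_plP :
    IsLaguerreLipschitz α β A f ↔
      ∀ t > 0, ∀ x ∈ posOrthant d, |deriv (fun u => plP d α u f x) t| ≤ A * t ^ (β - 1) :=
  forall₄_congr fun _ ht _ hx => by rw [(eventuallyEq_plP f hx ht).deriv_eq]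

theorem besselLaguerreFracDeriv_eq (lam : ℝ) (f : (Fin d → ℝ) → ℝ) (hx : x ∈ posOrthant d) :
    besselLaguerreFracDeriv d α lam f x = besselFactor lam *
      ∫ u in Ioi 0, besselIntegrand lam (fun u => laguerrePoissonOp α u f x) (f x) u := by
  rw [besselLaguerreFracDeriv, ← besselFactor]
  congr 1
  refine setIntegral_congr_fun measurableSet_Ioi fun u hu => ?_
  simp only [besselIntegrand, plP_eq_laguerrePoissonOp hu f hx]

theorem IsLaguerreLipschitz.abs_besselLaguerreFracDeriv_le (hL : IsLaguerreLipschitz α β A f)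
    (hlam : 0 < lam) (hlamβ : lam < β) (hlam1 : lam < 1) (hf : Measurable f)
    (hM : ∀ y ∈ posOrthant d, |f y| ≤ M) (hx : x ∈ posOrthant d) :
    |besselLaguerreFracDeriv d α lam f x| ≤ |besselFactor lam| *
      ((1 / β + 2) * (1 / (β - lam) + 1 / lam) + (1 / (1 - lam) + 1 / lam)) * (M + A) := by
  have hM0 := nonneg_of_abs_le_on_posOrthant hM
  have hA := hL.nonneg
  have hβ : 0 < β := hlam.trans hlamβ
  have : 0 < 1 - lam := sub_pos.2 hlam1
  have : 0 < β - lam := sub_pos.2 hlamβ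
  rw [besselLaguerreFracDeriv_eq lam f hx, abs_mul, mul_assoc]
  gcongr
  calc _ ≤ (A / β + 2 * M) * (1 / (β - lam) + 1 / lam) + M * (1 / (1 - lam) + 1 / lam) :=
        hL.abs_besselIntegral_le hlam hlamβ hlam1 hf hM hx
    _ ≤ ((M + A) / β + 2 * (M + A)) * (1 / (β - lam) + 1 / lam) +
        (M + A) * (1 / (1 - lam) + 1 / lam) := by gcongr <;> linarith
    _ = _ := by ring

theorem IsLaguerreLipschitz.plP_besselLaguerreFracDeriv (hL : IsLaguerreLipschitz α β A f)
    (hlam : 0 < lam) (hlamβ : lam < β) (hlam1 : lam < 1) (hf : Measurable f)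
    (hM : ∀ y ∈ posOrthant d, |f y| ≤ M) (ht : 0 < t) (hx : x ∈ posOrthant d) :
    plP d α t (besselLaguerreFracDeriv d α lam f) x = besselFactor lam *
      ∫ u in Ioi 0, besselIntegrand lam (fun u => laguerrePoissonOp α (t + u) f x)
        (laguerrePoissonOp α t f x) u := by
  rw [plP_eq_laguerrePoissonOp ht _ hx, laguerrePoissonOp_congr α
      ((ae_restrict_mem (measurableSet_posOrthant d)).mono fun y hy =>
        besselLaguerreFracDeriv_eq lam f hy) t x,
    ← hL.laguerrePoissonOp_besselIntegral hlam hlamβ hlam1 hf hM ht x]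
  exact integral_const_mul _ _

theorem IsLaguerreLipschitz.abs_deriv_plP_besselLaguerreFracDeriv_le
    (hL : IsLaguerreLipschitz α β A f) (hlam : 0 < lam) (hlamβ : lam < β) (hβ : β ≤ 1)
    (hf : Measurable f) (hM : ∀ y ∈ posOrthant d, |f y| ≤ M) (ht : 0 < t) (hx : x ∈ posOrthant d) :
    |deriv (fun u => plP d α u (besselLaguerreFracDeriv d α lam f) x) t| ≤
      |besselFactor lam| * (25 * (1 / (1 - lam) + 1 / lam)) * (M + A) * t ^ (β - lam - 1) := by
  have hlam1 : lam < 1 := hlamβ.trans_le hβ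
  refine abs_deriv_le_of_abs_sub_le fun h hh => ?_
  rw [hL.plP_besselLaguerreFracDeriv hlam hlamβ hlam1 hf hM (by positivity) hx,
    hL.plP_besselLaguerreFracDeriv hlam hlamβ hlam1 hf hM ht hx, ← mul_sub, abs_mul]
  calc _ ≤ |besselFactor lam| *
        (25 * (1 / (1 - lam) + 1 / lam) * (M + A) * t ^ (β - lam - 1) * h) := by
        gcongr
        exact hL.abs_besselIntegral_sub_le hlam hlamβ.le hlam1 hβ hf hM ht hh.le hx
    _ = _ := by ring

end FractionalDerivative

theorem besselLaguerreFracDeriv_bounded_on_lipschitz_general {d : ℕ} {α : Fin d → ℝ}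
    (hα : ∀ j, -1 < α j) {lam β : ℝ} (hlam : 0 < lam) (hlamβ : lam < β) (hβ : β ≤ 1) :
    ∃ C > 0, ∀ (f : (Fin d → ℝ) → ℝ) (M A : ℝ), Measurable f → (∀ y ∈ posOrthant d, |f y| ≤ M) →
      (∀ t > (0 : ℝ), ∀ x ∈ posOrthant d,
        |deriv (fun u => plP d α u f x) t| ≤ A * t ^ (β - 1)) →
      (∀ x ∈ posOrthant d, |besselLaguerreFracDeriv d α lam f x| ≤ C * (M + A)) ∧
      (∀ t > (0 : ℝ), ∀ x ∈ posOrthant d,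
        |deriv (fun u => plP d α u (besselLaguerreFracDeriv d α lam f) x) t| ≤
          C * (M + A) * t ^ (β - lam - 1)) := by
  have : Fact (∀ j, -1 < α j) := ⟨hα⟩
  let C₁ := |besselFactor lam| *
    ((1 / β + 2) * (1 / (β - lam) + 1 / lam) + (1 / (1 - lam) + 1 / lam))
  let C₂ := |besselFactor lam| * (25 * (1 / (1 - lam) + 1 / lam))
  refine ⟨max 1 (max C₁ C₂), by positivity, fun f M A hf hM hderiv => ?_⟩
  have hL := isLaguerreLipschitz_iff_plP.2 hderiv
  have hMA : 0 ≤ M + A := add_nonneg (nonneg_of_abs_le_on_posOrthant hM) hL.nonneg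
  refine ⟨fun x hx => ?_, fun t ht x hx => ?_⟩
  · refine (hL.abs_besselLaguerreFracDeriv_le hlam hlamβ (hlamβ.trans_le hβ) hf hM hx).trans ?_
    gcongr
    exact le_max_of_le_right (le_max_left C₁ C₂)
  · refine (hL.abs_deriv_plP_besselLaguerreFracDeriv_le hlam hlamβ hβ hf hM ht hx).trans ?_
    gcongr
    exact le_max_of_le_right (le_max_right C₁ C₂)

theorem besselLaguerreFracDeriv_bounded_on_lipschitz
    (d : ℕ) (hd : 1 ≤ d) (α : Fin d → ℝ) (hα : ∀ j, -(1 / 2 : ℝ) < α j)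
    (lam β : ℝ) (hlam : 0 < lam) (hlamβ : lam < β) (hβ : β < 1) :
    ∃ C > 0, ∀ (f : (Fin d → ℝ) → ℝ) (M A : ℝ), Measurable f → (∀ y, |f y| ≤ M) →
      (∀ t > (0 : ℝ), ∀ x ∈ posOrthant d,
        |deriv (fun u => plP d α u f x) t| ≤ A * t ^ (β - 1)) →
      (∀ x ∈ posOrthant d, |besselLaguerreFracDeriv d α lam f x| ≤ C * (M + A)) ∧
      (∀ t > (0 : ℝ), ∀ x ∈ posOrthant d,
        |deriv (fun u => plP d α u (besselLaguerreFracDeriv d α lam f) x) t| ≤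
          C * (M + A) * t ^ (β - lam - 1)) :=
  let ⟨C, hC, h⟩ := besselLaguerreFracDeriv_bounded_on_lipschitz_general (α := α)
    (fun j => by linarith [hα j]) hlam hlamβ hβ.le
  ⟨C, hC, fun f M A hf hM => h f M A hf fun y _ => hM y⟩
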